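/- Let R = ℤ[√2], let F = ℚ₂(√2) with valuation ring O_F, and let φ : R → O_F be the ring homomorphism sending √2 ∈ R to √2 ∈ F. Let Q(x,y) = αx² + βxy + γy² be a binary quadratic form over R that is a sum of finitely many squares of linear forms over R. If the form φ(Q)(x,y) = φ(α)x² + φ(β)xy + φ(γ)y² is a sum of 4 squares of linear forms over O_F, then Q is a sum of 4 squares of linear forms over R. -/

import Mathlib

/-!
The proof works with the maximal order `Quat` of the Hamilton quaternions over `ℤ[√2]`, whose
reduced norm restricted to the Lipschitz order `ℤ[√2]⟨1, i, j, k⟩` is the sum of four squares. A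
form `αX² + 2bXY + γY²` is a sum of four squares as soon as it equals `nrm (Xa + Yb)` for two
elements `a`, `b` of the Lipschitz order.

*Representation by the order.* A totally positive element of `ℤ[√2]` is a sum of three squares in
`ℚ(√2)` (`TP.threeSq`). As in the classical proof of the three-square theorem, Dirichlet's theorem
on primes and quadratic reciprocity produce an even ternary lattice of determinant `2` representing
`2D`, and Hermite reduction (`hermite_step`, `ternary`) leaves only lattices that are rationally a
sum of three squares. Hence there is a quaternion over the field of fractions with prescribed trace
and norm; the order is Euclidean, so the quaternion can be conjugated into it (`exists_tr_nrm`),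
and principal ideals turn this into a representation of every totally positive definite binary form
by `nrm` (`rep`).

*Descent to the Lipschitz order.* If `αX² + 2bXY + γY²` is a sum of squares, then `α` and `γ` have
even irrational part. If `α = 2α'` and `γ = 2γ'`, the form is represented by `√2 x`, `√2 y`, where
`x`, `y` represent `α'X² + bXY + γ'Y²`; a case check modulo `√2` shows that multiplication by a
suitable unit, or by an element of norm `2 + √2` when that form is divisible by `2 + √2`, brings
the pair into the Lipschitz order (`core_even`). If one of `α`, `γ` is odd, a shear makes the other
one even, and a similar argument applies (`core_odd`). The only exceptions are the forms `Bad`: `2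
+ √2` times `2α₀X² + 2β₀XY + 2γ₀Y²` with `α₀`, `β₀`, `γ₀` prime to `√2`. Forms of determinant zero
are multiples `c(pX + qY)²` of a square and reduce to `c` being a sum of four squares
(`degenerate`).

*The local condition.* A bad form is not a sum of four squares over `ℤ₂[√2]`: comparing coordinates
modulo `4`, both families of coefficients have exactly two odd rational parts, in equal or
complementary positions, and the parity of the mixed coefficient is then contradictory (`no_bad`).
The integral closure of `ℤ₂` in `ℚ₂(√2)` is `ℤ₂[√2]` (`exists_int_coord`), so the hypothesis over
`O_F` excludes bad forms, and `descend` gives the result.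
-/

/-- The binary quadratic form `α x² + β x y + γ y²` over a commutative ring `R` is a sum of
`n` squares of linear forms over `R`. -/
def IsSumOfLinSq {R : Type*} [CommRing R] (n : ℕ) (α β γ : R) : Prop :=
  ∃ a b : Fin n → R,
    α = ∑ i, a i ^ 2 ∧ β = 2 * ∑ i, a i * b i ∧ γ = ∑ i, b i ^ 2

/-- The binary quadratic form `α x² + β x y + γ y²` (with coefficients in a field `F`) is a
sum of `n` squares of linear forms with coefficients in the subset `O ⊆ F`. -/
def IsSumOfLinSqIn {F : Type*} [Field F] (O : Set F) (n : ℕ) (α β γ : F) : Prop :=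
  ∃ a b : Fin n → F, (∀ i, a i ∈ O) ∧ (∀ i, b i ∈ O) ∧
    α = ∑ i, a i ^ 2 ∧ β = 2 * ∑ i, a i * b i ∧ γ = ∑ i, b i ^ 2

/-! ### Total positivity and divisibility in `ℤ[√2]` -/

namespace FourSq
open Zsqrtd

theorem norm_two (x : ℤ√2) : x.norm = x.re ^ 2 - 2 * x.im ^ 2 := by
  rw [Zsqrtd.norm_def]; ring

theorem norm_ne_zero {x : ℤ√2} (h : x ≠ 0) : x.norm ≠ 0 := by
  intro h0
  refine h ((Zsqrtd.norm_eq_zero ?_ x).1 h0)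
  rintro n hn
  have h1 : n < 2 := by nlinarith
  have h2 : -2 < n := by nlinarith
  interval_cases n <;> omega

instance : NoZeroDivisors (ℤ√2) where
  eq_zero_or_eq_zero_of_mul_eq_zero := by
    intro a b h
    by_contra! hh
    have := congrArg Zsqrtd.norm h
    rw [Zsqrtd.norm_mul, Zsqrtd.norm_zero] at this
    rcases mul_eq_zero.1 this with h | h
    · exact norm_ne_zero hh.1 h
    · exact norm_ne_zero hh.2 h

instance : IsDomain (ℤ√2) := NoZeroDivisors.to_isDomain _

/-- Total positivity in `ℤ[√2]`: both real embeddings are positive, expressed as positivity of the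
rational part and of the norm. -/
structure TP (x : ℤ√2) : Prop where
  re_pos : 0 < x.re
  norm_pos : 0 < x.norm

theorem TP.ne_zero {x : ℤ√2} (h : TP x) : x ≠ 0 := by
  rintro rfl; exact absurd h.re_pos (by simp)

theorem TP.mul {x y : ℤ√2} (hx : TP x) (hy : TP y) : TP (x * y) := by
  refine ⟨?_, by rw [Zsqrtd.norm_mul]; exact mul_pos hx.2 hy.2⟩
  obtain ⟨hx1, hx2⟩ := hx
  obtain ⟨hy1, hy2⟩ := hy
  rw [norm_two] at hx2 hy2
  rw [Zsqrtd.re_mul]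
  by_contra! h
  have h1 : 0 < x.re * y.re := mul_pos hx1 hy1
  have h2 : (x.re * y.re) ^ 2 ≤ (2 * x.im * y.im) ^ 2 := by nlinarith
  nlinarith [mul_pos hx2 hy2, sq_nonneg (x.im * y.im), mul_nonneg (sq_nonneg x.im) hy2.le,
    mul_nonneg (sq_nonneg y.im) hx2.le]

theorem TP.star {x : ℤ√2} (hx : TP x) : TP (star x) :=
  ⟨by simpa using hx.1, by rw [Zsqrtd.norm_conj]; exact hx.2⟩

theorem TP.add {x y : ℤ√2} (hx : TP x) (hy : TP y) : TP (x + y) := by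
  have h := (hx.mul hy.star).1
  have h1 := hx.2
  have h2 := hy.2
  refine ⟨by rw [Zsqrtd.re_add]; exact add_pos hx.1 hy.1, ?_⟩
  rw [norm_two] at *
  simp only [Zsqrtd.re_mul, Zsqrtd.re_star, Zsqrtd.im_star] at h
  simp only [Zsqrtd.re_add, Zsqrtd.im_add]
  nlinarith

theorem TP.of_mul {x y : ℤ√2} (hx : TP x) (h : TP (x * y)) : TP y := by
  have hn : 0 < y.norm := by
    have := h.2
    rw [Zsqrtd.norm_mul] at this
    exact (pos_iff_pos_of_mul_pos this).1 hx.2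
  refine ⟨?_, hn⟩
  by_contra! h0
  have hne : y.re ≠ 0 := by
    intro h1
    rw [norm_two, h1] at hn
    nlinarith [sq_nonneg y.im]
  have hneg : TP (-y) := ⟨by simp; omega, by rw [Zsqrtd.norm_neg]; exact hn⟩
  have h1 := (hx.mul hneg).1
  have h2 := h.1
  rw [mul_neg, Zsqrtd.re_neg] at h1
  omega

theorem TP.sq {x : ℤ√2} (hx : x ≠ 0) : TP (x ^ 2) := by
  constructor
  · rw [pow_two, Zsqrtd.re_mul]
    rcases eq_or_ne x.re 0 with h | h
    · rcases eq_or_ne x.im 0 with h' | h'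
      · exact absurd (Zsqrtd.ext h h') hx
      · have := mul_self_pos.2 h'
        nlinarith [mul_self_nonneg x.re]
    · have := mul_self_pos.2 h
      nlinarith [mul_self_nonneg x.im]
  · rw [pow_two, Zsqrtd.norm_mul]
    exact mul_self_pos.2 (norm_ne_zero hx)

theorem TP.intCast {n : ℤ} (h : 0 < n) : TP (n : ℤ√2) :=
  ⟨by simpa using h, by rw [Zsqrtd.norm_intCast]; positivity⟩

theorem TP.one : TP (1 : ℤ√2) := by simpa using TP.intCast (n := 1) (by norm_num)

/-- Total nonnegativity; since `√2` is irrational this is `0` or totally positive. -/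
def TN (x : ℤ√2) : Prop := x = 0 ∨ TP x

theorem TN.add {x y : ℤ√2} (hx : TN x) (hy : TN y) : TN (x + y) := by
  rcases hx with rfl | hx
  · simpa using hy
  · rcases hy with rfl | hy
    · rw [add_zero]; exact Or.inr hx
    · exact Or.inr (hx.add hy)

theorem TN.sq (x : ℤ√2) : TN (x ^ 2) := by
  rcases eq_or_ne x 0 with rfl | h
  · left; simp
  · exact Or.inr (TP.sq h)

theorem TN.sum {ι : Type*} (s : Finset ι) (f : ι → ℤ√2) (h : ∀ i ∈ s, TN (f i)) :
    TN (∑ i ∈ s, f i) :=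
  Finset.sum_induction f TN (fun _ _ => TN.add) (Or.inl rfl) h

theorem TP.add_TN {x y : ℤ√2} (hx : TP x) (hy : TN y) : TP (x + y) := by
  rcases hy with rfl | hy
  · simpa using hx
  · exact hx.add hy

theorem TN.not_neg {x : ℤ√2} (hx : TN x) (hy : TP (-x)) : False := by
  rcases hx with rfl | hx
  · exact absurd hy.1 (by simp)
  · have := hx.1
    have := hy.1
    rw [Zsqrtd.re_neg] at this
    omega

/-- Up to squares of units, a totally positive element is `a + b√2` with `2|b| ≤ a`. -/
theorem exists_balanced (n : ℕ) : ∀ x : ℤ√2, TP x → x.re ≤ n →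
    ∃ η η' x₀ : ℤ√2, η * η' = 1 ∧ x = η ^ 2 * x₀ ∧ TP x₀ ∧ 2 * |x₀.im| ≤ x₀.re := by
  induction n with
  | zero => intro x hx h; have := hx.1; simp at h; omega
  | succ n ih =>
    intro x hx hn
    by_cases hb : 2 * |x.im| ≤ x.re
    · exact ⟨1, 1, x, by simp, by simp, hx, hb⟩
    push Not at hb
    rcases lt_abs.1 (show x.re < |2 * x.im| by rwa [abs_mul, abs_two]) with h | h
    · have hu : TP (⟨3, -2⟩ : ℤ√2) := ⟨by norm_num, by rw [norm_two]; norm_num⟩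
      obtain ⟨η, η', x₀, h1, h2, h3, h4⟩ := ih (⟨3, -2⟩ * x) (hu.mul hx) (by
        rw [Zsqrtd.re_mul]; push_cast at hn; simp only; omega)
      refine ⟨η * ⟨1, 1⟩, η' * ⟨-1, 1⟩, x₀, ?_, ?_, h3, h4⟩
      · have : (⟨1, 1⟩ * ⟨-1, 1⟩ : ℤ√2) = 1 := by ext <;> simp
        calc _ = (η * η') * (⟨1, 1⟩ * ⟨-1, 1⟩) := by ring
          _ = 1 := by rw [h1, this, one_mul]
      · have : (⟨1, 1⟩ ^ 2 * ⟨3, -2⟩ : ℤ√2) = 1 := by ext <;> simp [pow_two]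
        calc x = (⟨1, 1⟩ ^ 2 * ⟨3, -2⟩) * x := by rw [this, one_mul]
          _ = ⟨1, 1⟩ ^ 2 * (⟨3, -2⟩ * x) := by ring
          _ = _ := by rw [h2]; ring
    · have hu : TP (⟨3, 2⟩ : ℤ√2) := ⟨by norm_num, by rw [norm_two]; norm_num⟩
      obtain ⟨η, η', x₀, h1, h2, h3, h4⟩ := ih (⟨3, 2⟩ * x) (hu.mul hx) (by
        rw [Zsqrtd.re_mul]; push_cast at hn; simp only; omega)
      refine ⟨η * ⟨-1, 1⟩, η' * ⟨1, 1⟩, x₀, ?_, ?_, h3, h4⟩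
      · have : (⟨1, 1⟩ * ⟨-1, 1⟩ : ℤ√2) = 1 := by ext <;> simp
        calc _ = (η * η') * (⟨1, 1⟩ * ⟨-1, 1⟩) := by ring
          _ = 1 := by rw [h1, this, one_mul]
      · have : (⟨-1, 1⟩ ^ 2 * ⟨3, 2⟩ : ℤ√2) = 1 := by ext <;> simp [pow_two]
        calc x = (⟨-1, 1⟩ ^ 2 * ⟨3, 2⟩) * x := by rw [this, one_mul]
          _ = ⟨-1, 1⟩ ^ 2 * (⟨3, 2⟩ * x) := by ring
          _ = _ := by rw [h2]; ring

theorem TP.balanced {x : ℤ√2} (hx : TP x) :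
    ∃ η η' x₀ : ℤ√2, η * η' = 1 ∧ x = η ^ 2 * x₀ ∧ TP x₀ ∧ 2 * |x₀.im| ≤ x₀.re :=
  exists_balanced x.re.toNat x hx (Int.self_le_toNat _)

theorem sq_norm_unit {η η' : ℤ√2} (h : η * η' = 1) : (η ^ 2).norm = 1 := by
  have := congrArg Zsqrtd.norm h
  rw [Zsqrtd.norm_mul, Zsqrtd.norm_one] at this
  rw [pow_two, Zsqrtd.norm_mul]
  rcases Int.eq_one_or_neg_one_of_mul_eq_one this with h | h <;> rw [h] <;> norm_num

/-- Totally positive units are squares of units. -/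
theorem TP.unit_sq {x : ℤ√2} (hx : TP x) (h1 : x.norm = 1) : ∃ η η' : ℤ√2, η * η' = 1 ∧ x = η ^ 2 := by
  obtain ⟨η, η', x₀, h, h2, h3, h4⟩ := hx.balanced
  refine ⟨η, η', h, ?_⟩
  rw [h2, Zsqrtd.norm_mul, sq_norm_unit h, one_mul, norm_two] at h1
  have h5 := h3.1
  have h6 : x₀.re ^ 2 ≤ 2 := by
    have := abs_nonneg x₀.im
    have := sq_abs x₀.im
    nlinarith
  have h7 : x₀.re = 1 := by nlinarith
  have h8 : x₀.im = 0 := by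
    rw [h7] at h4
    have := abs_nonneg x₀.im
    exact abs_eq_zero.1 (by omega)
  have : x₀ = 1 := Zsqrtd.ext (by simp [h7]) (by simp [h8])
  rw [h2, this, mul_one]

/-- Nearest-integer rounding. -/
theorem exists_round (x M : ℤ) (hM : 0 < M) : ∃ q : ℤ, 2 * |x - q * M| ≤ M := by
  refine ⟨(2 * x + M) / (2 * M), ?_⟩
  have h1 := Int.emod_nonneg (2 * x + M) (show 2 * M ≠ 0 by omega)
  have h2 := Int.emod_lt_of_pos (2 * x + M) (show 0 < 2 * M by omega)
  have h3 := Int.emod_add_mul_ediv (2 * x + M) (2 * M)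
  generalize (2 * x + M) / (2 * M) = q at *
  rcases abs_cases (x - q * M) with ⟨h, _⟩ | ⟨h, _⟩ <;> rw [h] <;> nlinarith

theorem mul_star_self (y : ℤ√2) : y * star y = ((y.norm : ℤ) : ℤ√2) :=
  (Zsqrtd.norm_eq_mul_conj y).symm

/-- Euclidean division in `ℤ[√2]` with respect to the absolute norm. -/
theorem exists_div (x y : ℤ√2) (hy : y ≠ 0) :
    ∃ q, (x - q * y).norm.natAbs < y.norm.natAbs := by
  set n := y.norm with hn
  have hn0 : n ≠ 0 := norm_ne_zero hy
  set z := x * star y * (n.sign : ℤ√2) with hz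
  have habs : 0 < |n| := abs_pos.2 hn0
  obtain ⟨q1, h1⟩ := exists_round z.re |n| habs
  obtain ⟨q2, h2⟩ := exists_round z.im |n| habs
  refine ⟨⟨q1, q2⟩, ?_⟩
  set q : ℤ√2 := ⟨q1, q2⟩ with hq
  have key : (x - q * y) * star y * (n.sign : ℤ√2) = z - q * (|n| : ℤ) := by
    have : (|n| : ℤ) = n * n.sign := (Int.mul_sign_self n).symm ▸ (Int.abs_eq_natAbs n)
    rw [this, hz]
    push_cast
    have := mul_star_self y
    rw [← hn] at this
    rw [← this]
    ring
  have key2 := congrArg Zsqrtd.norm key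
  rw [Zsqrtd.norm_mul, Zsqrtd.norm_mul, Zsqrtd.norm_conj, ← hn, Zsqrtd.norm_intCast, norm_two (z - _)]
    at key2
  have hs : n.sign * n.sign = 1 := by
    rcases lt_or_gt_of_ne hn0 with h | h
    · rw [Int.sign_eq_neg_one_of_neg h]; norm_num
    · rw [Int.sign_eq_one_of_pos h]; norm_num
  rw [hs, mul_one] at key2
  simp only [Zsqrtd.re_sub, Zsqrtd.im_sub, Zsqrtd.re_mul, Zsqrtd.im_mul, Zsqrtd.re_intCast,
    Zsqrtd.im_intCast, mul_zero, add_zero, zero_add] at key2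
  simp only [hq] at key2
  generalize z.re - q1 * |n| = X at *
  generalize z.im - q2 * |n| = Y at *
  have hX : (2 * X) ^ 2 ≤ |n| ^ 2 := by
    rw [← sq_abs (2 * X), abs_mul, abs_two]; gcongr
  have hY : (2 * Y) ^ 2 ≤ |n| ^ 2 := by
    rw [← sq_abs (2 * Y), abs_mul, abs_two]; gcongr
  have h3 : |(x - q * y).norm * n| < |n| * |n| := by
    rw [key2, abs_lt]
    constructor <;> nlinarith
  rw [abs_mul] at h3
  have := lt_of_mul_lt_mul_right h3 habs.le
  rw [Int.abs_eq_natAbs, Int.abs_eq_natAbs] at this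
  exact_mod_cast this

theorem bezout_aux (n : ℕ) : ∀ x y : ℤ√2, y.norm.natAbs ≤ n →
    ∃ g u v p q : ℤ√2, g = u * x + v * y ∧ x = p * g ∧ y = q * g := by
  induction n using Nat.strong_induction_on with
  | _ n ih =>
    intro x y hn
    rcases eq_or_ne y 0 with rfl | hy
    · exact ⟨x, 1, 0, 1, 0, by ring, by ring, by ring⟩
    obtain ⟨q, hq⟩ := exists_div x y hy
    obtain ⟨g, u, v, a, b, h1, h2, h3⟩ := ih _ (lt_of_lt_of_le hq hn) y (x - q * y) le_rfl
    exact ⟨g, v, u - v * q, b + q * a, a, by rw [h1]; ring,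
      by linear_combination h3 + q * h2, h2⟩

theorem bezout (x y : ℤ√2) :
    ∃ g u v p q : ℤ√2, g = u * x + v * y ∧ x = p * g ∧ y = q * g :=
  bezout_aux _ x y le_rfl

theorem exists_unit_TP {x : ℤ√2} (hx : x ≠ 0) : ∃ e e' : ℤ√2, e * e' = 1 ∧ TP (e * x) := by
  have key : ∀ x : ℤ√2, 0 < x.norm → ∃ e e' : ℤ√2, e * e' = 1 ∧ TP (e * x) := by
    intro x h
    rcases lt_or_ge 0 x.re with h1 | h1
    · exact ⟨1, 1, by ring, by rw [one_mul]; exact ⟨h1, h⟩⟩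
    · refine ⟨-1, -1, by ring, ?_, ?_⟩
      · have : x.re ≠ 0 := by
          intro h0
          rw [norm_two, h0] at h
          nlinarith [sq_nonneg x.im]
        simp; omega
      · rw [neg_one_mul, Zsqrtd.norm_neg]; exact h
  rcases lt_or_gt_of_ne (norm_ne_zero hx) with h | h
  · obtain ⟨e, e', h1, h2⟩ := key (⟨1, 1⟩ * x) (by
      rw [Zsqrtd.norm_mul, norm_two ⟨1, 1⟩]; norm_num; exact h)
    refine ⟨e * ⟨1, 1⟩, e' * ⟨-1, 1⟩, ?_, by rw [mul_assoc]; exact h2⟩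
    have : (⟨1, 1⟩ * ⟨-1, 1⟩ : ℤ√2) = 1 := by ext <;> simp
    linear_combination h1 * ⟨1, 1⟩ * ⟨-1, 1⟩ + this
  · exact key x h

/-- A totally positive generator `g` of the ideal `(x, y)`, with Bézout coefficients and cofactors;
`g` can be made totally positive because `1 + √2` has norm `-1`. -/
theorem bezout_TP (x y : ℤ√2) (hx : x ≠ 0) :
    ∃ g u v p q : ℤ√2, TP g ∧ g = u * x + v * y ∧ x = p * g ∧ y = q * g ∧ u * p + v * q = 1 := by
  obtain ⟨g, u, v, p, q, h1, h2, h3⟩ := bezout x y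
  have hg : g ≠ 0 := by rintro rfl; exact hx (by rw [h2, mul_zero])
  obtain ⟨e, e', he, hT⟩ := exists_unit_TP hg
  have h4 : u * p + v * q = 1 := by
    apply mul_right_cancel₀ hg
    linear_combination -h1 - u * h2 - v * h3
  refine ⟨e * g, e * u, e * v, e' * p, e' * q, hT, by rw [h1]; ring, ?_, ?_, ?_⟩
  · linear_combination h2 - p * g * he
  · linear_combination h3 - q * g * he
  · linear_combination (u * p + v * q) * he + h4

end FourSq

/-! ### Reduction of ternary lattices over `ℤ[√2]` -/

namespace FourSq
open Zsqrtd

/-- The real inequality behind `hermite_step`. -/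
theorem hermite_ineq {X Y M a b n : ℤ} (hM : 0 < M) (hX : 2 * |X| ≤ M) (hY : 2 * |Y| ≤ M)
    (hb : 2 * |b| ≤ a) (hab : a ^ 2 - 2 * b ^ 2 = M ^ 2 * n) (hn : 17 * n < M ^ 2) :
    (X ^ 2 - 2 * Y ^ 2) ^ 2 + 2 * ((X ^ 2 + 2 * Y ^ 2) * a + 4 * X * Y * b) + n * M ^ 2 < M ^ 4 := by
  have ha : 0 ≤ a := by have := abs_nonneg b; omega
  have hb2 : 4 * b ^ 2 ≤ a ^ 2 := by
    have := abs_nonneg b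
    rw [← sq_abs b]; nlinarith
  have hM2 : 0 < M ^ 2 := by positivity
  have ha2 : 1000 * a ≤ 344 * M ^ 2 := by
    by_contra! h
    have h1 : (344 * M ^ 2) ^ 2 < (1000 * a) ^ 2 := by gcongr
    have h2 : 17 * (M ^ 2 * n) ≤ M ^ 2 * M ^ 2 := by nlinarith
    nlinarith
  have hX2 : 4 * X ^ 2 ≤ M ^ 2 := by
    have := abs_nonneg X
    rw [← sq_abs X]; nlinarith
  have hY2 : 4 * Y ^ 2 ≤ M ^ 2 := by
    have := abs_nonneg Y
    rw [← sq_abs Y]; nlinarith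
  have hcross : 8 * (X * Y * b) ≤ 2 * a * (X ^ 2 + Y ^ 2) := by
    have h1 : X * Y * b ≤ |X * Y| * |b| := by rw [← abs_mul]; exact le_abs_self _
    have h2 : 2 * |X * Y| ≤ X ^ 2 + Y ^ 2 := by
      rw [abs_mul, ← sq_abs X, ← sq_abs Y]; nlinarith [sq_nonneg (|X| - |Y|)]
    have h3 : |X * Y| * |b| * 2 ≤ |X * Y| * a := by
      have := abs_nonneg (X * Y); nlinarith
    nlinarith
  have hX0 := sq_nonneg X
  have hY0 := sq_nonneg Y
  generalize X ^ 2 = u at *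
  generalize Y ^ 2 = v at *
  have hM4 : M ^ 4 = M ^ 2 * M ^ 2 := by ring
  rw [hM4]
  generalize M ^ 2 = m at *
  have h1 : 16 * ((u - 2 * v) ^ 2) ≤ 4 * m ^ 2 - 12 * u * m := by
    nlinarith [mul_nonneg hX0 (sub_nonneg.2 hX2), mul_nonneg hY0 (sub_nonneg.2 hY2),
      mul_nonneg (sub_nonneg.2 hX2) (sub_nonneg.2 hY2)]
  have h2 : 1000 * (a * (4 * u + 6 * v)) ≤ 344 * m * (4 * u + 6 * v) := by nlinarith
  nlinarith

/-- A Hermite reduction step over `ℤ[√2]`: translating `c` by a multiple of `μ` makes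
`(c - rμ)² + δ` smaller in norm than `μ²`, as long as `δ` is small compared to `μ²`. -/
theorem hermite_step {μ δ : ℤ√2} (hμ : TP μ) (hδ : TP δ) (c : ℤ√2)
    (h : 17 * δ.norm < μ.norm ^ 2) : ∃ r : ℤ√2, ((c - r * μ) ^ 2 + δ).norm < μ.norm ^ 2 := by
  have hτ : TP (μ ^ 2 * star δ) := (TP.sq hμ.ne_zero).mul hδ.star
  obtain ⟨η, η', τ, h1, h2, h3, h4⟩ := hτ.balanced
  set κ := star η' with hκ
  have hκη : κ * star η = 1 := by
    rw [hκ, mul_comm, ← star_mul', h1, star_one]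
  have hκn := sq_norm_unit hκη
  set M := μ.norm with hM
  have hMpos : 0 < M := hμ.2
  obtain ⟨r1, hr1⟩ := exists_round (κ * c * star μ).re M hMpos
  obtain ⟨r2, hr2⟩ := exists_round (κ * c * star μ).im M hMpos
  refine ⟨star η * ⟨r1, r2⟩, ?_⟩
  set r : ℤ√2 := ⟨r1, r2⟩ with hr
  set Θ : ℤ√2 := (κ * c - r * μ) * star μ with hΘ
  have hμμ : μ * star μ = ((M : ℤ) : ℤ√2) := mul_star_self μ
  have hΘ' : Θ = κ * c * star μ - r * ((M : ℤ) : ℤ√2) := by rw [hΘ, ← hμμ]; ring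
  have hΘre : Θ.re = (κ * c * star μ).re - r1 * M := by
    rw [hΘ']; simp [hr]
  have hΘim : Θ.im = (κ * c * star μ).im - r2 * M := by
    rw [hΘ']; simp [hr]
  rw [← hΘre] at hr1
  rw [← hΘim] at hr2
  set δ' := κ ^ 2 * δ with hδ'
  have hτ' : μ ^ 2 * star δ' = τ := by
    have : star κ = η' := by rw [hκ, star_star]
    rw [hδ', star_mul', star_pow, this]
    linear_combination η' ^ 2 * h2 + (η * η' + 1) * τ * h1
  have hn' : δ'.norm = δ.norm := by rw [hδ', Zsqrtd.norm_mul, hκn, one_mul]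
  have hτn : τ.re ^ 2 - 2 * τ.im ^ 2 = M ^ 2 * δ.norm := by
    rw [← norm_two, ← hτ', Zsqrtd.norm_mul, Zsqrtd.norm_conj, hn', pow_two, Zsqrtd.norm_mul, ← hM]
    ring
  have key := hermite_ineq hMpos hr1 hr2 h4 hτn h
  set e := κ * c - r * μ with he
  have hE : κ ^ 2 * ((c - star η * r * μ) ^ 2 + δ) = e ^ 2 + δ' := by
    rw [he, hδ']
    linear_combination (-2 * κ * c * r * μ + r ^ 2 * μ ^ 2 * (κ * star η + 1)) * hκη
  have hN : ((c - star η * r * μ) ^ 2 + δ).norm = (e ^ 2 + δ').norm := by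
    rw [← hE, Zsqrtd.norm_mul, hκn, one_mul]
  have hexp : (e ^ 2 + δ').norm = e.norm ^ 2 + δ.norm + 2 * (e ^ 2 * star δ').re := by
    rw [← hn']
    simp only [norm_two, pow_two, Zsqrtd.re_add, Zsqrtd.im_add, Zsqrtd.re_mul, Zsqrtd.im_mul,
      Zsqrtd.re_star, Zsqrtd.im_star]
    ring
  have hΘn : Θ.norm = e.norm * M := by rw [hΘ, Zsqrtd.norm_mul, Zsqrtd.norm_conj]
  have hre : M ^ 2 * (e ^ 2 * star δ').re = (Θ ^ 2 * τ).re := by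
    have : Θ ^ 2 * τ = ((M ^ 2 : ℤ) : ℤ√2) * (e ^ 2 * star δ') := by
      rw [hΘ, ← hτ']; push_cast; rw [← hμμ]; ring
    rw [this, Zsqrtd.re_mul ((M ^ 2 : ℤ) : ℤ√2), Zsqrtd.re_intCast, Zsqrtd.im_intCast]; ring
  have hre2 : (Θ ^ 2 * τ).re = (Θ.re ^ 2 + 2 * Θ.im ^ 2) * τ.re + 4 * Θ.re * Θ.im * τ.im := by
    simp only [pow_two, Zsqrtd.re_mul, Zsqrtd.im_mul]; ring
  rw [hN, hexp]
  rw [← hre2, ← hre, ← norm_two, hΘn] at key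
  have : M ^ 2 * (e.norm ^ 2 + δ.norm + 2 * (e ^ 2 * star δ').re) < M ^ 2 * M ^ 2 := by
    nlinarith
  exact lt_of_mul_lt_mul_left this (by positivity)

/-- `D` becomes a sum of three squares over `ℚ(√2)`. -/
def ThreeSq (D : ℤ√2) : Prop := ∃ w x y z : ℤ√2, w ≠ 0 ∧ D * w ^ 2 = x ^ 2 + y ^ 2 + z ^ 2

theorem ThreeSq.of_mul_sq {D c : ℤ√2} (hc : c ≠ 0) (h : ThreeSq (D * c ^ 2)) : ThreeSq D := by
  obtain ⟨w, x, y, z, hw, h⟩ := h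
  exact ⟨c * w, x, y, z, mul_ne_zero hc hw, by rw [← h]; ring⟩

theorem ThreeSq.mul_sq {D : ℤ√2} (c : ℤ√2) (h : ThreeSq D) : ThreeSq (D * c ^ 2) := by
  obtain ⟨w, x, y, z, hw, h⟩ := h
  exact ⟨w, c * x, c * y, c * z, hw, by linear_combination c ^ 2 * h⟩

/-- If `ν` is a sum of two squares, then so is `ν (Y² + Z²)`. -/
theorem final_two {D w X Y Z ν p q : ℤ√2} (hw : w ≠ 0) (hν : ν = p ^ 2 + q ^ 2)
    (h : D * w ^ 2 = X ^ 2 + ν * Y ^ 2 + ν * Z ^ 2) : ThreeSq D :=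
  ⟨w, X, p * Y + q * Z, p * Z - q * Y, hw, by rw [h, hν]; ring⟩

/-- With `ω = 2 + √2`, the form `⟨ω, ων, ν⟩` is isometric over `ℚ(√2)` to the sum of three squares
when `ν = p² + ωq²`: the last two terms become `ω(pY + qZ)² + (pZ - ωqY)²`, and `2ω = (1 + √2)² +
1`. -/
theorem final_omega {D w X Y Z ν p q : ℤ√2} (hw : w ≠ 0) (hν : ν = p ^ 2 + ⟨2, 1⟩ * q ^ 2)
    (h : D * w ^ 2 = ⟨2, 1⟩ * X ^ 2 + ⟨2, 1⟩ * ν * Y ^ 2 + ν * Z ^ 2) : ThreeSq D := by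
  have hs : (⟨0, 1⟩ : ℤ√2) ^ 2 = 2 := by ext <;> simp [pow_two]
  have hω : 2 * (⟨2, 1⟩ : ℤ√2) = ⟨1, 1⟩ ^ 2 + 1 := by ext <;> simp [pow_two]
  have h0 : (⟨0, 1⟩ : ℤ√2) ≠ 0 := by intro h; simpa using congrArg Zsqrtd.im h
  generalize (⟨2, 1⟩ : ℤ√2) = ω at *
  generalize (⟨0, 1⟩ : ℤ√2) = s at *
  generalize (⟨1, 1⟩ : ℤ√2) = ε at *
  refine ⟨s * w, ε * X + (p * Y + q * Z), ε * (p * Y + q * Z) - X, s * (p * Z - ω * q * Y),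
    mul_ne_zero h0 hw, ?_⟩
  subst hν
  linear_combination s ^ 2 * h + (D * w ^ 2 - D * w ^ 2 + ω * X ^ 2 + ω * (p * Y + q * Z) ^ 2) * hs
    + (X ^ 2 + (p * Y + q * Z) ^ 2) * hω

/-- The elements `a + c√2` with `2|c| ≤ a`, norm at most `32`, and the residues mod `4` of minus a
square. -/
theorem nu_list {a c : ℤ} (h2 : 0 < a) (h3 : a ≤ 8) (h5 : -4 ≤ c) (h6 : c ≤ 4)
    (hpos : 0 < a ^ 2 - 2 * c ^ 2) (h32 : a ^ 2 - 2 * c ^ 2 ≤ 32) (hb : 2 * |c| ≤ a)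
    (h : (a % 4 = 0 ∧ c % 4 = 0) ∨ (a % 4 = 2 ∧ c % 4 = 0) ∨ (a % 4 = 3 ∧ c % 4 = 0) ∨
        (a % 4 = 1 ∧ c % 4 = 2)) :
    (a = 8 ∧ c = 4) ∨ (a = 8 ∧ c = -4) ∨ (a = 2 ∧ c = 0) ∨ (a = 3 ∧ c = 0) ∨ (a = 4 ∧ c = 0) ∨
      (a = 5 ∧ c = 2) ∨ (a = 5 ∧ c = -2) := by
  have h7 := le_abs_self c
  have h8 := neg_le_abs c
  have h9 : c = -4 ∨ c = -2 ∨ c = 0 ∨ c = 2 ∨ c = 4 := by omega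
  rcases h9 with rfl | rfl | rfl | rfl | rfl <;> interval_cases a <;> omega

/-- The end of the reduction. The bounds leave finitely many diagonal forms `⟨μ, μν, ν⟩`, and the
congruence `ν ≡ -b² mod 4μ` excludes all those not isometric to the sum of three squares. -/
theorem final_stage {D w X Y Z μ ν e b : ℤ√2} (hμ : TP μ) (hν : TP ν)
    (hμb : 2 * |μ.im| ≤ μ.re) (hνb : 2 * |ν.im| ≤ ν.re)
    (hn1 : 16 * μ.norm ^ 2 ≤ 17 * ν.norm) (hn2 : ν.norm ^ 2 ≤ 272 * μ.norm)
    (hν4 : ν = 4 * μ * e - b ^ 2) (hw : w ≠ 0)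
    (h : D * w ^ 2 = μ * X ^ 2 + μ * ν * Y ^ 2 + ν * Z ^ 2) : ThreeSq D := by
  have hs : (⟨0, 1⟩ : ℤ√2) ^ 2 = 2 := by ext <;> simp [pow_two]
  have hs' : (2 : ℤ√2) = ⟨2, 0⟩ := by ext <;> simp
  have bd : ∀ x : ℤ√2, 2 * |x.im| ≤ x.re → x.re ^ 2 ≤ 2 * x.norm := by
    intro x hx
    have := abs_nonneg x.im
    rw [norm_two, ← sq_abs x.im]; nlinarith
  have hμ6 : μ.norm ≤ 6 := by
    by_contra! h6
    have h1 : 16 * (μ.norm ^ 2 * μ.norm ^ 2) * 16 ≤ 17 * 17 * (ν.norm ^ 2) := by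
      have := hμ.2; have := hν.2
      nlinarith [mul_le_mul hn1 hn1 (by positivity) (by positivity)]
    have h2 : 256 * (μ.norm ^ 3) * μ.norm ≤ 289 * 272 * μ.norm := by nlinarith
    have h3 := le_of_mul_le_mul_right h2 hμ.2
    have h4 : (7 : ℤ) ^ 3 ≤ μ.norm ^ 3 := by gcongr; omega
    omega
  have hμl : μ = ⟨1, 0⟩ ∨ μ = ⟨2, 0⟩ ∨ μ = ⟨2, 1⟩ ∨ μ = ⟨2, -1⟩ := by
    have h1 := bd μ hμb
    have h2 := hμ.1
    obtain ⟨a, c⟩ := μ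
    rw [norm_two] at *
    simp only at *
    have h3 : a ≤ 3 := by nlinarith
    have h4 := abs_le.1 (show |c| ≤ 1 by omega)
    obtain ⟨h5, h6⟩ := h4
    interval_cases a <;> interval_cases c <;> simp_all
  have hνl : ν = ⟨2, 0⟩ ∨ ν = ⟨3, 0⟩ ∨ ν = ⟨4, 0⟩ ∨ ν = ⟨5, 2⟩ ∨ ν = ⟨5, -2⟩ ∨
      (μ = ⟨2, 0⟩ ∧ (ν = ⟨8, 4⟩ ∨ ν = ⟨8, -4⟩)) := by
    have hμ4 : μ.norm ≤ 4 := by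
      rcases hμl with h | h | h | h <;> rw [h, norm_two] <;> norm_num
    have h32 : ν.norm ≤ 32 := by have := hν.2; nlinarith
    have h1 := bd ν hνb
    have h2 := hν.1
    have hre := congrArg Zsqrtd.re hν4
    have him := congrArg Zsqrtd.im hν4
    have e1 : (4 * μ * e - b ^ 2).re = 4 * (μ * e).re - (b.re ^ 2 + 2 * b.im ^ 2) := by
      rw [pow_two, mul_assoc]; simp [Zsqrtd.re_mul]; ring
    have e2 : (4 * μ * e - b ^ 2).im = 4 * (μ * e).im - 2 * (b.re * b.im) := by
      rw [pow_two, mul_assoc]; simp [Zsqrtd.im_mul]; ring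
    rw [e1] at hre
    rw [e2] at him
    have h23 : ν.norm = 32 → μ = ⟨2, 0⟩ := by
      intro h
      rw [h] at hn2
      rcases hμl with h | h | h | h <;> rw [h] at hn2 ⊢ <;> rw [norm_two] at hn2 <;> norm_num at hn2
    generalize (μ * e).re = k at *
    generalize (μ * e).im = l at *
    obtain ⟨x, y⟩ := b
    obtain ⟨a, c⟩ := ν
    have hν2 := hν.2
    rw [norm_two] at h1 h32 h23 hν2
    simp only at h1 h2 h32 h23 hνb hre him hν2
    have h3 : a ≤ 8 := by nlinarith
    obtain ⟨h5, h6⟩ := abs_le.1 (show |c| ≤ 4 by omega)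
    have hxy : (a % 4 = 0 ∧ c % 4 = 0) ∨ (a % 4 = 2 ∧ c % 4 = 0) ∨ (a % 4 = 3 ∧ c % 4 = 0) ∨
        (a % 4 = 1 ∧ c % 4 = 2) := by
      rcases Int.even_or_odd' x with ⟨x', rfl | rfl⟩ <;>
        rcases Int.even_or_odd' y with ⟨y', rfl | rfl⟩ <;> ring_nf at hre him <;> omega
    have h7 := nu_list h2 h3 h5 h6 hν2 h32 hνb hxy
    simp only [Zsqrtd.mk.injEq]
    rcases h7 with h7 | h7 | h7 | h7 | h7 | h7 | h7
    all_goals obtain ⟨rfl, rfl⟩ := h7; norm_num at h23; simp [h23]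
  rcases hμl with rfl | rfl | hμ2
  · have h' : D * w ^ 2 = X ^ 2 + ν * Y ^ 2 + ν * Z ^ 2 := by
      have : (⟨1, 0⟩ : ℤ√2) = 1 := rfl
      rw [this] at h; linear_combination h
    rcases hνl with rfl | rfl | rfl | rfl | rfl | ⟨h1, h2⟩
    · exact final_two (p := 1) (q := 1) hw (by ext <;> simp) h'
    · exact final_two (p := 1) (q := ⟨0, 1⟩) hw (by ext <;> simp [pow_two]) h'
    · exact final_two (p := ⟨2, 0⟩) (q := 0) hw (by ext <;> simp [pow_two]) h'
    · exact final_two (p := ⟨1, 1⟩) (q := ⟨0, 1⟩) hw (by ext <;> simp [pow_two]) h'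
    · exact final_two (p := ⟨1, -1⟩) (q := ⟨0, 1⟩) hw (by ext <;> simp [pow_two]) h'
    · simp at h1
  · have h' : D * w ^ 2 = (⟨0, 1⟩ * X) ^ 2 + ν * (⟨0, 1⟩ * Y) ^ 2 + ν * Z ^ 2 := by
      rw [← hs', ← hs] at h; linear_combination h
    rcases hνl with rfl | rfl | rfl | rfl | rfl | ⟨h1, rfl | rfl⟩
    · exact final_two (p := 1) (q := 1) hw (by ext <;> simp) h'
    · exact final_two (p := 1) (q := ⟨0, 1⟩) hw (by ext <;> simp [pow_two]) h'
    · exact final_two (p := ⟨2, 0⟩) (q := 0) hw (by ext <;> simp [pow_two]) h'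
    · exact final_two (p := ⟨1, 1⟩) (q := ⟨0, 1⟩) hw (by ext <;> simp [pow_two]) h'
    · exact final_two (p := ⟨1, -1⟩) (q := ⟨0, 1⟩) hw (by ext <;> simp [pow_two]) h'
    · exact final_two (p := ⟨2, 1⟩) (q := ⟨0, 1⟩) hw (by ext <;> simp [pow_two]) h'
    · exact final_two (p := ⟨2, -1⟩) (q := ⟨0, 1⟩) hw (by ext <;> simp [pow_two]) h'
  · obtain ⟨X', Y', h'⟩ : ∃ X' Y', D * w ^ 2 = ⟨2, 1⟩ * X' ^ 2 + ⟨2, 1⟩ * ν * Y' ^ 2 + ν * Z ^ 2 := by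
      rcases hμ2 with rfl | rfl
      · exact ⟨X, Y, h⟩
      · have : (⟨2, -1⟩ : ℤ√2) = ⟨2, 1⟩ * ⟨-1, 1⟩ ^ 2 := by ext <;> simp [pow_two]
        exact ⟨⟨-1, 1⟩ * X, ⟨-1, 1⟩ * Y, by rw [h, this]; ring⟩
    rcases hνl with rfl | rfl | rfl | rfl | rfl | ⟨h1, h2⟩
    · exact final_omega (p := ⟨0, 1⟩) (q := 0) hw (by ext <;> simp [pow_two]) h'
    · exfalso
      have hre := congrArg Zsqrtd.re hν4
      have him := congrArg Zsqrtd.im hν4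
      obtain ⟨x, y⟩ := b
      obtain ⟨k, l⟩ := e
      rcases hμ2 with rfl | rfl <;> simp [pow_two] at hre him <;>
      rcases Int.even_or_odd' x with ⟨x', rfl | rfl⟩ <;>
        rcases Int.even_or_odd' y with ⟨y', rfl | rfl⟩ <;> ring_nf at hre him <;>
        rcases Int.even_or_odd' x' with ⟨x'', rfl | rfl⟩ <;> ring_nf at hre him <;> omega
    · exact final_omega (p := ⟨2, 0⟩) (q := 0) hw (by ext <;> simp [pow_two]) h'
    · exact final_omega (p := 1) (q := ⟨0, 1⟩) hw (by ext <;> simp [pow_two]) h'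
    · exact final_omega (p := 1) (q := ⟨2, -1⟩) hw (by ext <;> simp [pow_two]) h'
    · rcases hμ2 with rfl | rfl <;> simp at h1

/-- An even totally positive ternary lattice of determinant `2` (Gram matrix with rows `(A,B,C)`,
`(B,E,F)`, `(C,F,H)`) representing `2D` forces `D` to be a sum of three squares over `ℚ(√2)`. -/
theorem ternary (D : ℤ√2) (k : ℕ × ℕ) : ∀ A B C E F H x y z μ e₂ e₃ : ℤ√2,
    A.norm.toNat = k.1 → (A * E - B ^ 2).norm.toNat = k.2 →
    A = 2 * μ → E = 2 * e₂ → H = 2 * e₃ → TP A → TP (A * E - B ^ 2) →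
    A * E * H + 2 * B * C * F - A * F ^ 2 - E * C ^ 2 - H * B ^ 2 = 2 →
    2 * D = A * x ^ 2 + E * y ^ 2 + H * z ^ 2 + 2 * B * x * y + 2 * C * x * z + 2 * F * y * z →
    ThreeSq D := by
  induction k using (WellFounded.prod_lex Nat.lt_wfRel.wf Nat.lt_wfRel.wf).induction with
  | _ k ih =>
  intro A B C E F H x y z μ e₂ e₃ hk1 hk2 hA hE hH hTA hTg hdet hD
  by_cases c1 : 17 * (A * E - B ^ 2).norm < A.norm ^ 2
  · obtain ⟨r, hr⟩ := hermite_step hTA hTg B c1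
    have hAE : A * (E - 2 * r * B + r ^ 2 * A) = (B - r * A) ^ 2 + (A * E - B ^ 2) := by ring
    have hTE : TP (E - 2 * r * B + r ^ 2 * A) := by
      refine hTA.of_mul ?_
      rw [hAE, add_comm]
      exact hTg.add_TN (TN.sq _)
    rw [← hAE, Zsqrtd.norm_mul, pow_two A.norm] at hr
    have hlt := lt_of_mul_lt_mul_left hr hTA.2.le
    have hg : (E - 2 * r * B + r ^ 2 * A) * A - (B - r * A) ^ 2 = A * E - B ^ 2 := by ring
    refine ih ((E - 2 * r * B + r ^ 2 * A).norm.toNat, (A * E - B ^ 2).norm.toNat) ?_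
      (E - 2 * r * B + r ^ 2 * A) (B - r * A) (F - r * C) A C H y (x + r * y) z
      (e₂ - r * B + r ^ 2 * μ) μ e₃ rfl ?_ ?_ hA hH hTE ?_ ?_ ?_
    · have := hTA.2
      have := hTE.2
      refine Prod.Lex.left _ _ (?_ : _ < _)
      omega
    · rw [hg]
    · rw [hE, hA]; ring
    · rw [hg]; exact hTg
    · linear_combination hdet
    · rw [hD]; ring
  have hgg : (A * F - B * C) ^ 2 + 2 * A = (A * E - B ^ 2) * (A * H - C ^ 2) := by
    rw [← hdet]; ring
  by_cases c2 : 17 * (2 * A).norm < (A * E - B ^ 2).norm ^ 2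
  · have hT2 : TP (2 * A) := by
      have := (TP.intCast (n := 2) (by norm_num)).mul hTA
      exact_mod_cast this
    obtain ⟨r, hr⟩ := hermite_step hTg hT2 (A * F - B * C) c2
    have hgg' : (A * F - B * C - r * (A * E - B ^ 2)) ^ 2 + 2 * A =
        (A * E - B ^ 2) * (A * (H - 2 * r * F + r ^ 2 * E) - (C - r * B) ^ 2) := by
      linear_combination hgg
    have hTg' : TP (A * (H - 2 * r * F + r ^ 2 * E) - (C - r * B) ^ 2) := by
      refine hTg.of_mul ?_
      rw [← hgg', add_comm]
      exact hT2.add_TN (TN.sq _)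
    rw [hgg', Zsqrtd.norm_mul, pow_two (A * E - B ^ 2).norm] at hr
    have hlt := lt_of_mul_lt_mul_left hr hTg.2.le
    refine ih (A.norm.toNat, (A * (H - 2 * r * F + r ^ 2 * E) - (C - r * B) ^ 2).norm.toNat) ?_
      A (C - r * B) B (H - 2 * r * F + r ^ 2 * E) (F - r * E) E x z (y + r * z)
      μ (e₃ - r * F + r ^ 2 * e₂) e₂ rfl rfl hA ?_ hE hTA hTg' ?_ ?_
    · have := hTg.2
      have := hTg'.2
      obtain ⟨k1, k2⟩ := k
      simp only at hk1 hk2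
      rw [hk1]
      refine Prod.Lex.right _ (?_ : _ < _)
      omega
    · rw [hE, hH]; ring
    · linear_combination hdet
    · rw [hD]; ring
  push Not at c1 c2
  have n2 : (2 : ℤ√2).norm = 4 := by
    rw [norm_two]; simp
  rw [Zsqrtd.norm_mul, n2] at c2
  have hTμ : TP μ := by
    have h2 : TP (2 : ℤ√2) := by exact_mod_cast TP.intCast (n := 2) (by norm_num)
    exact h2.of_mul (hA ▸ hTA)
  set g := A * E - B ^ 2 with hg
  obtain ⟨η, η', μ₀, hη, hμ₀, hTμ₀, hbμ⟩ := hTμ.balanced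
  obtain ⟨θ, θ', ν₀, hθ, hν₀, hTν₀, hbν⟩ := hTg.balanced
  have hAn : A.norm = 4 * μ₀.norm := by
    rw [hA, hμ₀, Zsqrtd.norm_mul, Zsqrtd.norm_mul, n2, sq_norm_unit hη, one_mul]
  have hgn : g.norm = ν₀.norm := by
    rw [hν₀, Zsqrtd.norm_mul, sq_norm_unit hθ, one_mul]
  rw [hAn, hgn] at c1 c2
  have hw : 4 * μ * g ≠ 0 := by
    refine mul_ne_zero (mul_ne_zero ?_ hTμ.ne_zero) hTg.ne_zero
    intro h; simpa using congrArg Zsqrtd.re h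
  refine final_stage (D := D) (w := 4 * μ * g) (e := θ' ^ 2 * η ^ 2 * e₂) (b := θ' * B)
    (X := η * (2 * g * (A * x + B * y + C * z)))
    (Y := η * θ * (2 * (g * y + (A * F - B * C) * z)))
    (Z := θ * (4 * μ * z)) hTμ₀ hTν₀ hbμ hbν (by linarith) (by linarith) ?_ hw ?_
  · linear_combination (-(θ * θ') - 1) * ν₀ * hθ - θ' ^ 2 * hν₀ + θ' ^ 2 * hg + θ' ^ 2 * E * hA
      + 2 * θ' ^ 2 * μ * hE + 4 * θ' ^ 2 * e₂ * hμ₀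
  · have e1 : 2 * D * A * g = g * (A * x + B * y + C * z) ^ 2 +
        (g * y + (A * F - B * C) * z) ^ 2 + 2 * A * z ^ 2 := by
      rw [hg]; linear_combination A * (A * E - B ^ 2) * hD + A * z ^ 2 * hdet
    have e2 : D * (4 * μ * g) ^ 2 = μ * (2 * g * (A * x + B * y + C * z)) ^ 2 +
        μ * g * (2 * (g * y + (A * F - B * C) * z)) ^ 2 + g * (4 * μ * z) ^ 2 := by
      linear_combination 4 * μ * g * e1 + (-8 * μ * g ^ 2 * D + 8 * μ * g * z ^ 2) * hA
    rw [e2]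
    generalize A * x + B * y + C * z = U
    generalize g * y + (A * F - B * C) * z = V
    have e3 : ∀ p q r : ℤ√2, μ * p ^ 2 + μ * g * q ^ 2 + g * r ^ 2 =
        μ₀ * (η * p) ^ 2 + μ₀ * ν₀ * (η * θ * q) ^ 2 + ν₀ * (θ * r) ^ 2 := by
      intro p q r
      rw [hμ₀, hν₀]; ring
    exact e3 _ _ _

end FourSq

/-! ### Square roots modulo auxiliary primes -/

namespace FourSq
open Zsqrtd

/-- If `e ≡ -1 mod 4D` and `-D` is invertible and a square mod `e`, then the even lattice with Gram
matrix rows `(2D, 1, 0)`, `(1, 2k, -s)`, `(0, -s, 2m)` has determinant `2` and represents `2D`. -/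
theorem threeSq_of_dvd {D : ℤ√2} (hD : TP D) {e : ℤ} (he : 0 < e) {k s m : ℤ√2}
    (h1 : 1 + (e : ℤ√2) = 4 * D * k) (h2 : s ^ 2 * D + 1 = e * m) : ThreeSq D := by
  have hT2 : TP (2 * D) := by
    have := (TP.intCast (n := 2) (by norm_num)).mul hD
    exact_mod_cast this
  refine ternary D (_, _) (2 * D) 1 0 (2 * k) (-s) (2 * m) 1 0 0 D k m rfl rfl rfl rfl rfl hT2
    ?_ ?_ ?_
  · have : 2 * D * (2 * k) - 1 ^ 2 = (e : ℤ√2) := by linear_combination -h1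
    rw [this]; exact TP.intCast he
  · linear_combination -2 * h2 - 2 * m * h1
  · ring

/-- Solving `s² D ≡ -1` modulo a prime, with `s = a + b√2`, in coordinates. -/
theorem lift_root {p : ℕ} [Fact p.Prime] {D : ℤ√2} {a b : ZMod p}
    (h1 : (a ^ 2 + 2 * b ^ 2) * D.re + 4 * a * b * D.im = -1)
    (h2 : (a ^ 2 + 2 * b ^ 2) * D.im + 2 * a * b * D.re = 0) :
    ∃ s : ℤ√2, ((p : ℤ) : ℤ√2) ∣ s ^ 2 * D + 1 := by
  obtain ⟨a, rfl⟩ := ZMod.intCast_surjective a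
  obtain ⟨b, rfl⟩ := ZMod.intCast_surjective b
  refine ⟨⟨a, b⟩, (Zsqrtd.intCast_dvd _ _).2 ⟨?_, ?_⟩⟩
  · rw [← ZMod.intCast_zmod_eq_zero_iff_dvd]
    simp only [pow_two, Zsqrtd.re_add, Zsqrtd.re_mul, Zsqrtd.im_mul, Zsqrtd.re_one]
    push_cast
    linear_combination h1
  · rw [← ZMod.intCast_zmod_eq_zero_iff_dvd]
    simp only [pow_two, Zsqrtd.im_add, Zsqrtd.re_mul, Zsqrtd.im_mul, Zsqrtd.im_one]
    push_cast
    linear_combination h2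

theorem isSquare_zmod_two : ∀ a : ZMod 2, IsSquare a := by decide

theorem isSquare_mul_of_not {p : ℕ} [Fact p.Prime] {a b : ZMod p} (ha : ¬ IsSquare a)
    (hb : ¬ IsSquare b) : IsSquare (a * b) := by
  have hp : ringChar (ZMod p) ≠ 2 := by
    rw [ZMod.ringChar_zmod_n]
    rintro rfl
    exact ha (isSquare_zmod_two a)
  have ha0 : a ≠ 0 := by rintro rfl; exact ha (IsSquare.zero)
  have hb0 : b ≠ 0 := by rintro rfl; exact hb (IsSquare.zero)
  rw [← quadraticChar_one_iff_isSquare (mul_ne_zero ha0 hb0), map_mul,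
    (quadraticChar_neg_one_iff_not_isSquare).2 ha, (quadraticChar_neg_one_iff_not_isSquare).2 hb]
  norm_num

/-- For a prime inert in `ℤ[√2]`, an element whose norm is a nonzero square mod `p` is minus a
square mod `p`. -/
theorem root_inert {p : ℕ} [Fact p.Prime] (hp : p % 8 = 3 ∨ p % 8 = 5) {D : ℤ√2}
    (h0 : (D.norm : ZMod p) ≠ 0) (hs : IsSquare (D.norm : ZMod p)) :
    ∃ s : ℤ√2, ((p : ℤ) : ℤ√2) ∣ s ^ 2 * D + 1 := by
  have hp2 : p ≠ 2 := by rintro rfl; omega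
  have h2ns : ¬ IsSquare (2 : ZMod p) := by
    rw [ZMod.exists_sq_eq_two_iff hp2]; omega
  have h20 : (2 : ZMod p) ≠ 0 := by intro h; rw [h] at h2ns; exact h2ns IsSquare.zero
  obtain ⟨n, hn⟩ := hs
  have hn0 : n ≠ 0 := by rintro rfl; exact h0 (by simpa using hn)
  rw [norm_two] at hn
  push_cast at hn
  have main : ∀ n : ZMod p, n ≠ 0 → (D.re : ZMod p) ^ 2 - 2 * (D.im : ZMod p) ^ 2 = n * n →
      -(D.re : ZMod p) + n ≠ 0 → ∃ s : ℤ√2, ((p : ℤ) : ℤ√2) ∣ s ^ 2 * D + 1 := by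
    intro n hn0 hn hc
    by_cases hsq : IsSquare (2 * (-(D.re : ZMod p) + n))
    · obtain ⟨z, hz⟩ := hsq
      have hz0 : z ≠ 0 := by rintro rfl; simp [h20, hc] at hz
      refine lift_root (a := (-(D.re : ZMod p) + n) / (z * n)) (b := D.im / (z * n)) ?_ ?_
      · field_simp
        linear_combination (-n^2) * hz + (-2 * n + D.re) * hn
      · field_simp
        linear_combination (-D.im) * hn
    · obtain ⟨z, hz⟩ := isSquare_mul_of_not h2ns hsq
      have hz0 : z ≠ 0 := by rintro rfl; simp [h20, hc] at hz
      refine lift_root (a := 2 * D.im / (z * n)) (b := (-(D.re : ZMod p) + n) / (z * n)) ?_ ?_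
      · field_simp
        linear_combination (-n^2) * hz + 2 * (-2 * n + D.re) * hn
      · field_simp
        linear_combination (-2 * D.im) * hn
  by_cases hc : -(D.re : ZMod p) + n = 0
  · refine main (-n) (neg_ne_zero.2 hn0) (by rw [hn]; ring) ?_
    intro h
    have : 2 * n = 0 := by linear_combination hc - h
    simp [h20, hn0] at this
  · exact main n hn0 hn hc

/-- For `p ≡ 7 mod 16` the roots `t` of `t² = 2` have `2 + t` a non-square: otherwise `𝔽_p` would
contain `ζ + ζ⁻¹` for a primitive 16th root of unity `ζ`, forcing `p ≡ ±1 mod 16`. -/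
theorem not_isSquare_two_add {p : ℕ} [Fact p.Prime] (hp : p % 16 = 7) {t : ZMod p}
    (ht : t ^ 2 = 2) : ¬ IsSquare (2 + t) := by
  rintro ⟨y, hy⟩
  have hp2 : p ≠ 2 := by rintro rfl; omega
  let K := AlgebraicClosure (ZMod p)
  let f := algebraMap (ZMod p) K
  have h2 : (2 : K) ≠ 0 := by
    intro h
    have h' : ((2 : ℕ) : K) = 0 := by exact_mod_cast h
    rw [CharP.cast_eq_zero_iff K p] at h'
    have := Nat.le_of_dvd (by norm_num) h'
    have := (Fact.out : p.Prime).two_le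
    omega
  obtain ⟨d, hd⟩ := IsAlgClosed.exists_eq_mul_self ((f y) ^ 2 - 4)
  obtain ⟨z, hz⟩ : ∃ z : K, z ^ 2 - f y * z + 1 = 0 := by
    obtain ⟨c, hc⟩ : ∃ c : K, 2 * c = 1 := ⟨2⁻¹, mul_inv_cancel₀ h2⟩
    refine ⟨(f y + d) * c, ?_⟩
    linear_combination (-c ^ 2) * hd + (c * f y * (f y + d) - (2 * c + 1)) * hc
  have hfy : 2 + f t = f y * f y := by
    rw [← map_mul, ← hy, map_add, map_ofNat]
  have hft : f t ^ 2 = 2 := by rw [← map_pow, ht, map_ofNat]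
  -- `z² + z⁻² = t` and `z⁴ + z⁻⁴ = 0`
  have hz4 : z ^ 4 - f t * z ^ 2 + 1 = 0 := by
    linear_combination (z ^ 2 + f y * z + 1) * hz - z ^ 2 * hfy
  have hz8 : z ^ 8 = -1 := by
    linear_combination (z ^ 4 + f t * z ^ 2 + 1) * hz4 + z ^ 4 * hft
  have hz16 : z ^ 16 = 1 := by
    linear_combination (z ^ 8 - 1) * hz8
  have hzp : z ^ p = z ^ 7 := by
    have h : ∀ n : ℕ, z ^ (16 * n + 7) = z ^ 7 := fun n => by
      rw [pow_add, pow_mul, hz16, one_pow, one_mul]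
    rw [← h (p / 16)]
    congr 1
    omega
  have hfr : (z ^ p) ^ 2 - f y * z ^ p + 1 = 0 := by
    have h := congrArg (frobenius K p) hz
    simp only [map_add, map_sub, map_mul, map_pow, map_one, map_zero, frobenius_def] at h
    rw [← map_pow f y p, ZMod.pow_card] at h
    rw [← h]
  rw [hzp] at hfr
  have hz0 : z ≠ 0 := by rintro rfl; simp at hz
  have hprod : (z ^ 7 - z) * (z ^ 8 - 1) = 0 := by
    linear_combination z * hfr - z ^ 7 * hz
  rw [hz8] at hprod
  have h7 : z * (z ^ 6 - 1) = 0 := by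
    have : (z ^ 7 - z) * 2 = 0 := by linear_combination -hprod
    have := (mul_eq_zero.1 this).resolve_right h2
    linear_combination this
  have h6 := (mul_eq_zero.1 h7).resolve_left hz0
  have : (2 : K) = 0 := by
    have h2' : z ^ 2 = -1 := by linear_combination hz8 - z ^ 2 * h6
    have : z ^ 8 = 1 := by linear_combination (z ^ 6 - z ^ 4 + z ^ 2 - 1) * h2'
    linear_combination hz8 - this
  exact h2 this

/-- Dirichlet's theorem with one condition modulo a power of `2` and one modulo an odd number. -/
theorem exists_prime_crt {m : ℕ} (hm : Odd m) {c : ℤ} (hc : IsCoprime c (m : ℤ)) (j r : ℕ)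
    (hr : Odd r) (N : ℕ) :
    ∃ p : ℕ, N < p ∧ p.Prime ∧ p % 2 ^ j = r % 2 ^ j ∧ (m : ℤ) ∣ p - c := by
  have hco : IsCoprime ((2 ^ j : ℕ) : ℤ) (m : ℤ) := by
    rw [Nat.isCoprime_iff_coprime]
    exact Nat.Coprime.pow_left _ (Nat.coprime_two_left.2 hm)
  obtain ⟨u, v, huv⟩ := hco
  set a : ℤ := c * (u * (2 ^ j : ℕ)) + r * (v * m) with ha
  have hr' : IsCoprime (r : ℤ) ((2 ^ j : ℕ) : ℤ) := by
    rw [Nat.isCoprime_iff_coprime]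
    exact Nat.Coprime.pow_right _ (Nat.coprime_two_right.2 hr)
  have h1 : IsCoprime a ((2 ^ j * m : ℕ) : ℤ) := by
    push_cast
    refine IsCoprime.mul_right ?_ ?_
    · have : a = r + (2 ^ j : ℕ) * (u * (c - r)) := by rw [ha]; linear_combination r * huv
      rw [this]
      exact_mod_cast hr'.add_mul_left_left _
    · have : a = c + m * (v * (r - c)) := by rw [ha]; linear_combination c * huv
      rw [this]
      exact hc.add_mul_left_left _
  have hm0 : m ≠ 0 := by rintro rfl; simp at hm
  obtain ⟨p, hp1, hp2, hp3⟩ := Nat.forall_exists_prime_gt_and_zmodEq N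
    (mul_ne_zero (pow_ne_zero j two_ne_zero) hm0) h1
  refine ⟨p, hp1, hp2, ?_, ?_⟩
  · have h2 : (p : ℤ) ≡ a [ZMOD (2 ^ j : ℕ)] := by
      rw [Nat.cast_mul] at hp3
      exact hp3.of_mul_right _
    have h3 : a ≡ r [ZMOD (2 ^ j : ℕ)] := by
      refine (Int.modEq_iff_dvd.2 ⟨u * (r - c), ?_⟩)
      rw [ha]; linear_combination (-r : ℤ) * huv
    exact Int.natCast_modEq_iff.1 (h2.trans h3)
  · have h2 : a ≡ p [ZMOD m] := by
      have : ((2 ^ j * m : ℕ) : ℤ) = m * (2 ^ j : ℕ) := by push_cast; ring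
      rw [this] at hp3
      exact (hp3.of_mul_right _).symm
    have h3 := Int.modEq_iff_dvd.1 h2
    have h4 : (m : ℤ) ∣ a - c := ⟨v * (r - c), by rw [ha]; linear_combination c * huv⟩
    have := dvd_add h3 h4
    simpa using this

end FourSq

/-! ### Sums of three squares in `ℚ(√2)` -/

namespace FourSq
open Zsqrtd

theorem jacobi_congr {a b : ℤ} {m : ℕ} (h : (m : ℤ) ∣ a - b) : jacobiSym a m = jacobiSym b m := by
  rw [jacobiSym.mod_left a, jacobiSym.mod_left b, ((Int.modEq_iff_dvd.2 h).symm : a % m = b % m)]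

/-- Reciprocity in the form used below: `(m/p) = (-p/m)` for `p ≡ 3 mod 4`. -/
theorem jacobi_neg {m p : ℕ} (hm : Odd m) (hp : p % 4 = 3) {u : ℤ} (h : (m : ℤ) ∣ p - -u) :
    jacobiSym m p = jacobiSym u m := by
  have h1 : jacobiSym (p : ℤ) m = jacobiSym (-1) m * jacobiSym u m := by
    rw [jacobi_congr h, ← neg_one_mul, jacobiSym.mul_left]
  have hpo : Odd p := Nat.odd_iff.2 (by omega)
  rcases Nat.odd_mod_four_iff.1 (Nat.odd_iff.1 hm) with h4 | h4
  · rw [jacobiSym.quadratic_reciprocity_one_mod_four h4 hpo, h1, jacobiSym.at_neg_one hm,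
      ZMod.χ₄_nat_one_mod_four h4, one_mul]
  · rw [jacobiSym.quadratic_reciprocity_three_mod_four h4 hp, h1, jacobiSym.at_neg_one hm,
      ZMod.χ₄_nat_three_mod_four h4]
    ring

theorem isSquare_of_jacobi {p : ℕ} [Fact p.Prime] {a : ℤ} (h : jacobiSym a p = 1) :
    (a : ZMod p) ≠ 0 ∧ IsSquare (a : ZMod p) := by
  rw [← jacobiSym.legendreSym.to_jacobiSym] at h
  have h0 : (a : ZMod p) ≠ 0 := by
    intro h0
    rw [(legendreSym.eq_zero_iff p a).2 h0] at h
    norm_num at h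
  exact ⟨h0, (legendreSym.eq_one_iff p h0).1 h⟩

/-- For odd norm a single prime `p ≡ 3 mod 8`, `p ≡ -1 mod N(D)` serves as `e`. -/
theorem threeSq_odd {D : ℤ√2} (hD : TP D) {m : ℕ} (hm : Odd m) (hN : D.norm = m) : ThreeSq D := by
  obtain ⟨p, hp1, hp2, hp3, hp4⟩ := exists_prime_crt hm (c := -1) (isCoprime_one_left.neg_left)
    3 3 (by decide) 0
  have := Fact.mk hp2
  norm_num at hp3
  have hj : jacobiSym m p = 1 := by
    rw [jacobi_neg hm (by omega) hp4, jacobiSym.one_left]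
  have hs := isSquare_of_jacobi hj
  rw [← hN] at hs
  obtain ⟨s, k, hk⟩ := root_inert (Or.inl hp3) hs.1 hs.2
  have h4 : (4 * m : ℤ) ∣ 1 + p := by
    refine IsCoprime.mul_dvd ?_ (by omega) (by simpa [add_comm] using hp4)
    have : Nat.Coprime 4 m := Nat.Coprime.pow_left 2 (Nat.coprime_two_left.2 hm)
    exact_mod_cast Nat.isCoprime_iff_coprime.2 this
  obtain ⟨l, hl⟩ := h4
  refine threeSq_of_dvd hD (e := p) (by exact_mod_cast hp2.pos) (k := star D * l) ?_ hk
  have h5 := mul_star_self D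
  rw [hN] at h5
  have h6 : ((1 + p : ℤ) : ℤ√2) = ((4 * m * l : ℤ) : ℤ√2) := by rw [hl]
  push_cast at h6 h5 ⊢
  linear_combination h6 - 4 * l * h5

theorem exists_jacobi_neg_one {m : ℕ} (hm : Odd m) (hsq : ¬ IsSquare m) :
    ∃ u : ℤ, IsCoprime u (m : ℤ) ∧ jacobiSym u m = -1 := by
  obtain ⟨a, b, hab, hsf⟩ := Nat.sq_mul_squarefree m
  have ha1 : a ≠ 1 := by
    rintro rfl
    exact hsq ⟨b, by rw [← hab]; ring⟩
  obtain ⟨q, hq, a', ha'⟩ := Nat.exists_prime_and_dvd ha1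
  have hao : Odd a := Nat.Odd.of_mul_right (hab ▸ hm : Odd (b ^ 2 * a))
  have hqo : Odd q := Nat.Odd.of_mul_left (ha' ▸ hao : Odd (q * a'))
  have ha'o : Odd a' := Nat.Odd.of_mul_right (ha' ▸ hao : Odd (q * a'))
  have hbo : Odd b := by
    have : Odd (b ^ 2) := Nat.Odd.of_mul_left (hab ▸ hm : Odd (b ^ 2 * a))
    exact (Nat.odd_pow_iff (by norm_num)).1 this
  have hco : Nat.Coprime q a' := by
    rw [ha'] at hsf
    exact (Nat.squarefree_mul_iff.1 hsf).1
  have := Fact.mk hq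
  obtain ⟨c, hc⟩ := FiniteField.exists_nonsquare (F := ZMod q) (by
    rw [ZMod.ringChar_zmod_n]; rintro rfl; revert hqo; decide)
  obtain ⟨c, rfl⟩ := ZMod.intCast_surjective c
  have hc1 : jacobiSym c q = -1 := ZMod.nonsquare_iff_jacobiSym_eq_neg_one.2 hc
  have hcq : IsCoprime c (q : ℤ) := by
    rw [Int.isCoprime_iff_gcd_eq_one]
    by_contra h
    have : NeZero q := ⟨hq.ne_zero⟩
    rw [jacobiSym.eq_zero_iff_not_coprime.2 h] at hc1
    norm_num at hc1
  -- by the Chinese remainder theorem, `d` is `c` mod `q` and `1` mod the cofactor of `q` in `a`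
  obtain ⟨x, y, hxy⟩ := Nat.isCoprime_iff_coprime.2 hco
  set d : ℤ := 1 * (x * q) + c * (y * a') with hd
  have hdq : d = c + q * (x * (1 - c)) := by rw [hd]; linear_combination c * hxy
  have hda : d = 1 + a' * (y * (c - 1)) := by rw [hd]; linear_combination hxy
  have hdc : IsCoprime d (a : ℤ) := by
    rw [ha']
    push_cast
    refine IsCoprime.mul_right ?_ ?_
    · rw [hdq]; exact hcq.add_mul_left_left _
    · rw [hda]; exact isCoprime_one_left.add_mul_left_left _
  obtain ⟨u, hu1, hu2, -, hu4⟩ := exists_prime_crt hao hdc 0 1 (by decide) m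
  have hm0 : 0 < m := hm.pos
  have hum : Nat.Coprime u m := by
    rw [Nat.Prime.coprime_iff_not_dvd hu2]
    intro h
    have := Nat.le_of_dvd hm0 h
    omega
  refine ⟨u, Nat.isCoprime_iff_coprime.2 hum, ?_⟩
  have : NeZero q := ⟨hq.ne_zero⟩
  have : NeZero a' := ⟨ha'o.pos.ne'⟩
  have : NeZero (b ^ 2) := ⟨(pow_pos hbo.pos 2).ne'⟩
  have : NeZero b := ⟨hbo.pos.ne'⟩
  have : NeZero a := ⟨hao.pos.ne'⟩
  rw [← hab, jacobiSym.mul_right, jacobiSym.pow_right, jacobiSym.sq_one, ha', jacobiSym.mul_right, one_mul]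
  · have h1 : jacobiSym u q = -1 := by
      rw [← hc1]
      refine jacobi_congr ?_
      have h2 : (q : ℤ) ∣ u - d := dvd_trans ⟨a', by rw [ha']; push_cast; ring⟩ hu4
      have h3 : (q : ℤ) ∣ d - c := ⟨x * (1 - c), by rw [hdq]; ring⟩
      simpa using dvd_add h2 h3
    have h2 : jacobiSym u a' = 1 := by
      rw [← jacobiSym.one_left a']
      refine jacobi_congr ?_
      have h2 : (a' : ℤ) ∣ u - d := dvd_trans ⟨q, by rw [ha']; push_cast; ring⟩ hu4
      have h3 : (a' : ℤ) ∣ d - 1 := ⟨y * (c - 1), by rw [hda]; ring⟩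
      simpa using dvd_add h2 h3
    rw [h1, h2]; norm_num
  · have : Nat.Coprime u b := Nat.Coprime.coprime_dvd_right ⟨b * a, by rw [← hab]; ring⟩ hum
    exact_mod_cast this

/-- For `N(D) = 2m` with `m` odd and not a square, a product `e = pp'` of primes `p ≡ 3` and `p' ≡
5 mod 8` with `pp' ≡ -1 mod m` is used; the residue of `p` mod `m` is chosen with Jacobi symbol
compensating `(2/p) = (2/p') = -1`. -/
theorem threeSq_even {D : ℤ√2} (hD : TP D) {m : ℕ} (hm : Odd m) (hN : D.norm = 2 * m)
    (hsq : ¬ IsSquare m) : ThreeSq D := by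
  obtain ⟨u, hu1, hu2⟩ := exists_jacobi_neg_one hm hsq
  obtain ⟨v, w, hvw⟩ := id hu1
  have hv1 : IsCoprime v (m : ℤ) := ⟨u, w, by linear_combination hvw⟩
  have hvu : jacobiSym v m = -1 := by
    have h1 : jacobiSym (v * u) m = 1 := by
      rw [← jacobiSym.one_left m]
      exact jacobi_congr ⟨-w, by linear_combination hvw⟩
    rw [jacobiSym.mul_left, hu2] at h1
    omega
  obtain ⟨p, hp1, hp2, hp3, hp4⟩ := exists_prime_crt hm hu1.neg_left 3 3 (by decide) 0
  obtain ⟨p', hq1, hq2, hq3, hq4⟩ := exists_prime_crt hm hv1 3 5 (by decide) p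
  norm_num at hp3 hq3
  have := Fact.mk hp2
  have := Fact.mk hq2
  have hpo : Odd p := Nat.odd_iff.2 (by omega)
  have hqo : Odd p' := Nat.odd_iff.2 (by omega)
  have hj : jacobiSym (2 * m) p = 1 := by
    rw [jacobiSym.mul_left, jacobiSym.at_two hpo, ZMod.χ₈_nat_eq_if_mod_eight, hp3,
      jacobi_neg hm (by omega) hp4, hu2, if_neg (by omega)]
    norm_num
  have hj' : jacobiSym (2 * m) p' = 1 := by
    rw [jacobiSym.mul_left, jacobiSym.at_two hqo, ZMod.χ₈_nat_eq_if_mod_eight, hq3,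
      jacobiSym.quadratic_reciprocity_one_mod_four' hm (by omega), jacobi_congr hq4, hvu,
      if_neg (by omega)]
    norm_num
  have hs := isSquare_of_jacobi hj
  have hs' := isSquare_of_jacobi hj'
  rw [← hN] at hs hs'
  obtain ⟨s, hk⟩ := root_inert (Or.inl hp3) hs.1 hs.2
  obtain ⟨s', hk'⟩ := root_inert (Or.inr hq3) hs'.1 hs'.2
  have hco : IsCoprime (p : ℤ) (p' : ℤ) := by
    rw [Nat.isCoprime_iff_coprime]
    exact (Nat.coprime_primes hp2 hq2).2 (by omega)
  have hcoR : IsCoprime ((p : ℤ) : ℤ√2) ((p' : ℤ) : ℤ√2) := by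
    have := hco.map (Int.castRingHom (ℤ√2))
    simpa using this
  obtain ⟨x, y, hxy⟩ := id hcoR
  set S := s * (y * ((p' : ℤ) : ℤ√2)) + s' * (x * ((p : ℤ) : ℤ√2)) with hS
  have hdvd : ((p : ℤ) : ℤ√2) * ((p' : ℤ) : ℤ√2) ∣ S ^ 2 * D + 1 := by
    refine hcoR.mul_dvd ?_ ?_
    · have h1 : S = s + ((p : ℤ) : ℤ√2) * (x * (s' - s)) := by rw [hS]; linear_combination s * hxy
      rw [h1]
      have h2 := dvd_add hk (dvd_mul_right ((p : ℤ) : ℤ√2)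
        ((x * (s' - s)) * (2 * s + ((p : ℤ) : ℤ√2) * (x * (s' - s))) * D))
      convert h2 using 1
      ring
    · have h1 : S = s' + ((p' : ℤ) : ℤ√2) * (y * (s - s')) := by rw [hS]; linear_combination s' * hxy
      rw [h1]
      have h2 := dvd_add hk' (dvd_mul_right ((p' : ℤ) : ℤ√2)
        ((y * (s - s')) * (2 * s' + ((p' : ℤ) : ℤ√2) * (y * (s - s'))) * D))
      convert h2 using 1
      ring
  obtain ⟨k, hk⟩ := hdvd
  have h8 : (8 * m : ℤ) ∣ 1 + p * p' := by
    refine IsCoprime.mul_dvd ?_ ?_ ?_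
    · have : Nat.Coprime 8 m := Nat.Coprime.pow_left 3 (Nat.coprime_two_left.2 hm)
      exact_mod_cast Nat.isCoprime_iff_coprime.2 this
    · have h1 : p * p' % 8 = 7 := by rw [Nat.mul_mod, hp3, hq3]
      have : (8 : ℤ) ∣ ((1 + p * p' : ℕ) : ℤ) := by
        generalize p * p' = e at *
        omega
      exact_mod_cast this
    · have h1 := dvd_add (hp4.mul_right (p' : ℤ)) (hq4.mul_left (-u))
      have h2 := dvd_add h1 (dvd_mul_right (m : ℤ) w)
      convert h2 using 1
      linear_combination -hvw
  obtain ⟨l, hl⟩ := h8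
  refine threeSq_of_dvd hD (e := p * p') (by exact_mod_cast Nat.mul_pos hp2.pos hq2.pos)
    (k := star D * l) (s := S) (m := k) ?_ ?_
  · have h5 := mul_star_self D
    rw [hN] at h5
    have h6 : ((1 + p * p' : ℤ) : ℤ√2) = ((8 * m * l : ℤ) : ℤ√2) := by rw [hl]
    push_cast at h6 h5 ⊢
    linear_combination h6 - 4 * l * h5
  · rw [hk]; push_cast; ring

theorem sqrtd_sq : (⟨0, 1⟩ : ℤ√2) ^ 2 = 2 := by ext <;> simp [pow_two]

/-- For `D = r(2 + √2)` with `r` odd, a split prime `p ≡ 7 mod 16`, `p ≡ -1 mod r` serves as `e`: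
both images of `-D` mod `p` are squares. -/
theorem threeSq_omega_odd {r : ℕ} (hr : Odd r) : ThreeSq ((r : ℤ√2) * ⟨2, 1⟩) := by
  obtain ⟨p, hp1, hp2, hp3, hp4⟩ := exists_prime_crt hr (c := -1) (isCoprime_one_left.neg_left)
    4 7 (by decide) 0
  norm_num at hp3
  have := Fact.mk hp2
  have hj : jacobiSym r p = 1 := by
    rw [jacobi_neg hr (by omega) hp4, jacobiSym.one_left]
  obtain ⟨hr0, hrs⟩ := isSquare_of_jacobi hj
  push_cast at hr0 hrs
  have hp2' : p ≠ 2 := by rintro rfl; omega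
  obtain ⟨t, ht⟩ := (ZMod.exists_sq_eq_two_iff hp2').2 (Or.inr (by omega))
  have hm1 : ¬ IsSquare (-1 : ZMod p) := by
    rw [ZMod.exists_sq_eq_neg_one_iff]; omega
  have hnr : ¬ IsSquare (-(r : ZMod p)) := by
    intro h
    apply hm1
    have := h.div hrs
    rwa [neg_div, div_self hr0] at this
  have ht1 := not_isSquare_two_add hp3 (t := t) (by rw [pow_two, ht])
  have ht2 := not_isSquare_two_add hp3 (t := -t) (by rw [neg_sq, pow_two, ht])
  obtain ⟨y, hy⟩ := isSquare_mul_of_not hnr ht1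
  obtain ⟨z, hz⟩ := isSquare_mul_of_not hnr ht2
  have hy0 : y ≠ 0 := by
    rintro rfl
    rw [mul_zero, mul_eq_zero] at hy
    rcases hy with h | h
    · exact hnr (h ▸ IsSquare.zero)
    · exact ht1 (h ▸ IsSquare.zero)
  have hz0 : z ≠ 0 := by
    rintro rfl
    rw [mul_zero, mul_eq_zero] at hz
    rcases hz with h | h
    · exact hnr (h ▸ IsSquare.zero)
    · exact ht2 (h ▸ IsSquare.zero)
  have h20 : (2 : ZMod p) ≠ 0 := by
    intro h
    have h' : ((2 : ℕ) : ZMod p) = 0 := by exact_mod_cast h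
    rw [ZMod.natCast_eq_zero_iff] at h'
    have := Nat.le_of_dvd (by norm_num) h'
    omega
  have ht0 : t ≠ 0 := by
    rintro rfl
    rw [mul_zero] at ht
    exact h20 ht
  have hy1 : (y⁻¹) ^ 2 * (r * (2 + t)) = -1 := by
    field_simp; linear_combination -hy
  have hz1 : (z⁻¹) ^ 2 * (r * (2 - t)) = -1 := by
    field_simp; linear_combination -hz
  obtain ⟨a, b, ha, hb⟩ : ∃ a b : ZMod p, y⁻¹ = a + b * t ∧ z⁻¹ = a - b * t :=
    ⟨(y⁻¹ + z⁻¹) / 2, (y⁻¹ - z⁻¹) / (2 * t), by field_simp; ring, by field_simp; ring⟩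
  rw [ha] at hy1
  rw [hb] at hz1
  obtain ⟨s, k, hk⟩ := lift_root (p := p) (D := (r : ℤ√2) * ⟨2, 1⟩) (a := a) (b := b) (by
      simp only [Zsqrtd.re_mul, Zsqrtd.im_mul, Zsqrtd.re_natCast, Zsqrtd.im_natCast]
      push_cast
      apply mul_left_cancel₀ h20
      linear_combination hy1 + hz1 + 4 * r * (a * b + b ^ 2) * ht) (by
      simp only [Zsqrtd.re_mul, Zsqrtd.im_mul, Zsqrtd.re_natCast, Zsqrtd.im_natCast]
      push_cast
      apply mul_left_cancel₀ (mul_ne_zero h20 ht0)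
      linear_combination hy1 - hz1 + 2 * r * t * b ^ 2 * ht)
  have h8 : (8 * r : ℤ) ∣ 1 + p := by
    refine IsCoprime.mul_dvd ?_ (by omega) (by simpa [add_comm] using hp4)
    have : Nat.Coprime 8 r := Nat.Coprime.pow_left 3 (Nat.coprime_two_left.2 hr)
    exact_mod_cast Nat.isCoprime_iff_coprime.2 this
  obtain ⟨l, hl⟩ := h8
  have hT : TP ((r : ℤ√2) * ⟨2, 1⟩) := by
    refine TP.mul (by exact_mod_cast TP.intCast (n := r) (by exact_mod_cast hr.pos)) ⟨by simp, ?_⟩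
    rw [norm_two]; norm_num
  refine threeSq_of_dvd hT (e := p) (by exact_mod_cast hp2.pos) (k := ⟨2, -1⟩ * l) ?_ hk
  have h5 : (⟨2, 1⟩ : ℤ√2) * ⟨2, -1⟩ = 2 := by ext <;> simp
  have h6 : ((1 + p : ℤ) : ℤ√2) = ((8 * r * l : ℤ) : ℤ√2) := by rw [hl]
  push_cast at h6 ⊢
  linear_combination h6 - 4 * r * l * h5

theorem threeSq_omega {r : ℕ} (hr : 0 < r) : ThreeSq ((r : ℤ√2) * ⟨2, 1⟩) := by
  obtain ⟨k, m, hm, rfl⟩ := Nat.exists_eq_two_pow_mul_odd hr.ne'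
  have := (threeSq_omega_odd hm).mul_sq (⟨0, 1⟩ ^ k)
  have e : ((m : ℤ√2) * ⟨2, 1⟩) * (⟨0, 1⟩ ^ k) ^ 2 = ((2 ^ k * m : ℕ) : ℤ√2) * ⟨2, 1⟩ := by
    rw [← pow_mul, mul_comm k 2, pow_mul, sqrtd_sq]
    push_cast; ring
  rwa [e] at this

/-- If `N(D) = 2w²`, then `D(2 - √2)` has square norm, hence is a positive rational integer `r` up
to squares, so that `D` is `r(2 + √2)` up to squares. -/
theorem threeSq_even_sq {D : ℤ√2} (hD : TP D) {w : ℕ} (hN : D.norm = 2 * w ^ 2) : ThreeSq D := by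
  have hT : TP (D * ⟨2, -1⟩) := hD.mul ⟨by norm_num, by rw [norm_two]; norm_num⟩
  set x := (D * ⟨2, -1⟩).re with hx
  have hx0 : 0 < x := hT.1
  set r : ℕ := (2 * (x + 2 * w)).toNat with hr
  have hr' : (r : ℤ) = 2 * (x + 2 * w) := Int.toNat_of_nonneg (by positivity)
  have hr0 : 0 < r := by have : (0 : ℤ) < r := by rw [hr']; positivity
                         exact_mod_cast this
  have hnorm : (D * ⟨2, -1⟩).norm = (2 * w) ^ 2 := by
    rw [Zsqrtd.norm_mul, hN, norm_two]; ring
  rw [norm_two] at hnorm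
  have key : (D * ⟨2, -1⟩ + ((2 * w : ℕ) : ℤ√2)) ^ 2 = (r : ℤ√2) * (D * ⟨2, -1⟩) := by
    have : (r : ℤ√2) = ((2 * (x + 2 * w) : ℤ) : ℤ√2) := by rw [← hr']; push_cast; rfl
    rw [this]
    generalize D * ⟨2, -1⟩ = E at *
    ext
    · simp only [pow_two, Zsqrtd.re_mul, Zsqrtd.re_add, Zsqrtd.im_add, Zsqrtd.re_natCast,
        Zsqrtd.im_natCast, Zsqrtd.re_intCast, Zsqrtd.im_intCast, hx]
      push_cast
      linear_combination -hnorm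
    · simp only [pow_two, Zsqrtd.im_mul, Zsqrtd.re_add, Zsqrtd.im_add, Zsqrtd.re_natCast,
        Zsqrtd.im_natCast, Zsqrtd.re_intCast, Zsqrtd.im_intCast, hx]
      push_cast
      ring
  have hu : (⟨2, -1⟩ : ℤ√2) = ⟨2, 1⟩ * ⟨-1, 1⟩ ^ 2 := by ext <;> simp [pow_two]
  refine ThreeSq.of_mul_sq (c := (r : ℤ√2) * ⟨2, -1⟩) ?_ ?_
  · refine mul_ne_zero (by exact_mod_cast hr0.ne') ?_
    intro h; simpa using congrArg Zsqrtd.re h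
  · have := (threeSq_omega hr0).mul_sq (⟨-1, 1⟩ * (D * ⟨2, -1⟩ + ((2 * w : ℕ) : ℤ√2)))
    convert this using 1
    rw [mul_pow (⟨-1, 1⟩ : ℤ√2), key]
    linear_combination D * (r : ℤ√2) ^ 2 * ⟨2, -1⟩ * hu

theorem threeSq_aux (n : ℕ) : ∀ D : ℤ√2, TP D → D.norm.toNat ≤ n → ThreeSq D := by
  induction n with
  | zero => intro D hD h; have := hD.2; omega
  | succ n ih =>
    intro D hD hn
    have hpos := hD.2
    have hN := norm_two D
    obtain ⟨N, hN'⟩ := Int.eq_ofNat_of_zero_le hpos.le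
    rcases Int.even_or_odd' D.re with ⟨a, ha | ha⟩
    · rcases Int.even_or_odd' D.im with ⟨b, hb | hb⟩
      · have hD2 : D = ⟨a, b⟩ * ⟨0, 1⟩ ^ 2 := by
          rw [sqrtd_sq]; ext <;> simp [ha, hb] <;> ring
        have hTs : TP ((⟨0, 1⟩ : ℤ√2) ^ 2) := by
          rw [sqrtd_sq]; exact_mod_cast TP.intCast (n := 2) (by norm_num)
        have hT : TP (⟨a, b⟩ : ℤ√2) := hTs.of_mul (by rw [mul_comm, ← hD2]; exact hD)
        rw [hD2]
        refine (ih _ hT ?_).mul_sq _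
        have h1 : D.norm = 4 * (⟨a, b⟩ : ℤ√2).norm := by rw [hN, norm_two, ha, hb]; ring
        have := hT.2
        omega
      · have h1 : D.norm = 2 * (2 * a ^ 2 - (2 * b + 1) ^ 2) := by rw [hN, ha, hb]; ring
        obtain ⟨m, hm⟩ := Int.eq_ofNat_of_zero_le (show 0 ≤ 2 * a ^ 2 - (2 * b + 1) ^ 2 by omega)
        have hmo : Odd m := by
          rw [← Int.odd_coe_nat, ← hm, Int.odd_iff]; ring_nf; omega
        rw [hm] at h1
        by_cases hsq : IsSquare m
        · obtain ⟨w, rfl⟩ := hsq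
          exact threeSq_even_sq hD (w := w) (by rw [h1]; push_cast; ring)
        · exact threeSq_even hD hmo h1 hsq
    · refine threeSq_odd hD (m := N) ?_ hN'
      rw [← Int.odd_coe_nat, ← hN', hN, ha, Int.odd_iff]; ring_nf; omega

/-- Totally positive elements are sums of three squares in `ℚ(√2)`. -/
theorem TP.threeSq {D : ℤ√2} (hD : TP D) : ThreeSq D := threeSq_aux _ D hD le_rfl

end FourSq

/-! ### A maximal quaternion order -/

namespace FourSq
open Zsqrtd

/-- The element `√2` of `ℤ[√2]`. -/
def rt : ℤ√2 := ⟨0, 1⟩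

theorem rt_sq : rt * rt = 2 := by ext <;> simp [rt]

theorem rt_ne : rt ≠ 0 := by intro h; simpa [rt] using congrArg Zsqrtd.im h

/-- The maximal order of the Hamilton quaternions over `ℤ[√2]` spanned by `1`, `ζ = (1 + i)/√2`,
`η = (1 + j)/√2` and `ζη = (1 + i + j + k)/2`; the fields are the coordinates in this basis. -/
@[ext] structure Quat where
  p : ℤ√2
  q : ℤ√2
  r : ℤ√2
  s : ℤ√2

namespace Quat

instance : Zero Quat := ⟨⟨0, 0, 0, 0⟩⟩
instance : One Quat := ⟨⟨1, 0, 0, 0⟩⟩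
instance : Add Quat := ⟨fun x y => ⟨x.p + y.p, x.q + y.q, x.r + y.r, x.s + y.s⟩⟩
instance : Neg Quat := ⟨fun x => ⟨-x.p, -x.q, -x.r, -x.s⟩⟩
instance : Sub Quat := ⟨fun x y => ⟨x.p - y.p, x.q - y.q, x.r - y.r, x.s - y.s⟩⟩
/-- The product, from `ζ² = √2 ζ - 1`, `η² = √2 η - 1` and
`ηζ = (1 - √2²) + √2 ζ + √2 η - ζη`; keeping `1 - √2²` unevaluated makes the ring laws polynomial
identities in `√2`. -/
instance : Mul Quat := ⟨fun x y =>
  ⟨x.p * y.p - x.q * y.q + (1 - rt * rt) * x.r * y.q - x.r * y.r - rt * x.r * y.s - rt * x.s * y.q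
      - x.s * y.s,
   x.p * y.q + x.q * y.p + rt * x.q * y.q + rt * x.r * y.q + x.r * y.s + x.s * y.q - x.s * y.r,
   x.p * y.r + x.r * y.p - x.q * y.s + rt * x.r * y.q + rt * x.r * y.r + x.r * y.s + x.s * y.q,
   x.p * y.s + x.s * y.p + x.q * y.r + rt * x.q * y.s - x.r * y.q + rt * x.s * y.r + x.s * y.s⟩⟩

@[simp] theorem zero_p : (0 : Quat).p = 0 := rfl
@[simp] theorem zero_q : (0 : Quat).q = 0 := rfl
@[simp] theorem zero_r : (0 : Quat).r = 0 := rfl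
@[simp] theorem zero_s : (0 : Quat).s = 0 := rfl
@[simp] theorem one_p : (1 : Quat).p = 1 := rfl
@[simp] theorem one_q : (1 : Quat).q = 0 := rfl
@[simp] theorem one_r : (1 : Quat).r = 0 := rfl
@[simp] theorem one_s : (1 : Quat).s = 0 := rfl
@[simp] theorem add_p (x y : Quat) : (x + y).p = x.p + y.p := rfl
@[simp] theorem add_q (x y : Quat) : (x + y).q = x.q + y.q := rfl
@[simp] theorem add_r (x y : Quat) : (x + y).r = x.r + y.r := rfl
@[simp] theorem add_s (x y : Quat) : (x + y).s = x.s + y.s := rfl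
@[simp] theorem neg_p (x : Quat) : (-x).p = -x.p := rfl
@[simp] theorem neg_q (x : Quat) : (-x).q = -x.q := rfl
@[simp] theorem neg_r (x : Quat) : (-x).r = -x.r := rfl
@[simp] theorem neg_s (x : Quat) : (-x).s = -x.s := rfl
@[simp] theorem sub_p (x y : Quat) : (x - y).p = x.p - y.p := rfl
@[simp] theorem sub_q (x y : Quat) : (x - y).q = x.q - y.q := rfl
@[simp] theorem sub_r (x y : Quat) : (x - y).r = x.r - y.r := rfl
@[simp] theorem sub_s (x y : Quat) : (x - y).s = x.s - y.s := rfl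
@[simp] theorem mul_p (x y : Quat) : (x * y).p = x.p * y.p - x.q * y.q + (1 - rt * rt) * x.r * y.q
  - x.r * y.r - rt * x.r * y.s - rt * x.s * y.q - x.s * y.s := rfl
@[simp] theorem mul_q (x y : Quat) : (x * y).q = x.p * y.q + x.q * y.p + rt * x.q * y.q
  + rt * x.r * y.q + x.r * y.s + x.s * y.q - x.s * y.r := rfl
@[simp] theorem mul_r (x y : Quat) : (x * y).r = x.p * y.r + x.r * y.p - x.q * y.s + rt * x.r * y.q
  + rt * x.r * y.r + x.r * y.s + x.s * y.q := rfl
@[simp] theorem mul_s (x y : Quat) : (x * y).s = x.p * y.s + x.s * y.p + x.q * y.r + rt * x.q * y.s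
  - x.r * y.q + rt * x.s * y.r + x.s * y.s := rfl

instance : AddCommGroup Quat where
  add_assoc x y z := by ext1 <;> simp only [add_p, add_q, add_r, add_s] <;> ring
  zero_add x := by ext1 <;> simp
  add_zero x := by ext1 <;> simp
  add_comm x y := by ext1 <;> simp only [add_p, add_q, add_r, add_s] <;> ring
  neg_add_cancel x := by ext1 <;> simp
  sub_eq_add_neg x y := by ext1 <;> simp [sub_eq_add_neg]
  nsmul := nsmulRec
  zsmul := zsmulRec

instance : Ring Quat where
  __ := (inferInstance : AddCommGroup Quat)
  left_distrib x y z := by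
    ext1 <;> simp only [add_p, add_q, add_r, add_s, mul_p, mul_q, mul_r, mul_s] <;> ring
  right_distrib x y z := by
    ext1 <;> simp only [add_p, add_q, add_r, add_s, mul_p, mul_q, mul_r, mul_s] <;> ring
  zero_mul x := by ext1 <;> simp
  mul_zero x := by ext1 <;> simp
  mul_assoc x y z := by
    ext1 <;> simp only [mul_p, mul_q, mul_r, mul_s] <;> ring
  one_mul x := by ext1 <;> simp
  mul_one x := by ext1 <;> simp

/-- The scalars `ℤ[√2]` inside the order. -/
def of : ℤ√2 →+* Quat where
  toFun x := ⟨x, 0, 0, 0⟩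
  map_zero' := rfl
  map_one' := rfl
  map_add' x y := by ext1 <;> simp
  map_mul' x y := by ext1 <;> simp

@[simp] theorem of_p (x : ℤ√2) : (of x).p = x := rfl
@[simp] theorem of_q (x : ℤ√2) : (of x).q = 0 := rfl
@[simp] theorem of_r (x : ℤ√2) : (of x).r = 0 := rfl
@[simp] theorem of_s (x : ℤ√2) : (of x).s = 0 := rfl

theorem of_comm (x : ℤ√2) (y : Quat) : of x * y = y * of x := by
  ext1 <;> simp <;> ring

theorem of_inj {x y : ℤ√2} (h : of x = of y) : x = y := congrArg p h

/-- Quaternion conjugation. -/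
def conj (x : Quat) : Quat := ⟨x.p + rt * x.q + rt * x.r + x.s, -x.q, -x.r, -x.s⟩

/-- The reduced trace. -/
def tr (x : Quat) : ℤ√2 := 2 * x.p + rt * x.q + rt * x.r + x.s

/-- The reduced norm, the sum of the four squared Hamilton coordinates. -/
def nrm (x : Quat) : ℤ√2 := x.p ^ 2 + x.q ^ 2 + x.r ^ 2 + x.s ^ 2 + rt * x.p * x.q + rt * x.p * x.r
  + x.p * x.s + (rt * rt - 1) * x.q * x.r + rt * x.q * x.s + rt * x.r * x.s

@[simp] theorem conj_p (x : Quat) : (conj x).p = x.p + rt * x.q + rt * x.r + x.s := rfl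
@[simp] theorem conj_q (x : Quat) : (conj x).q = -x.q := rfl
@[simp] theorem conj_r (x : Quat) : (conj x).r = -x.r := rfl
@[simp] theorem conj_s (x : Quat) : (conj x).s = -x.s := rfl

theorem mul_conj (x : Quat) : x * conj x = of (nrm x) := by
  ext1 <;> simp only [mul_p, mul_q, mul_r, mul_s, conj_p, conj_q, conj_r, conj_s, of_p, of_q, of_r,
    of_s, nrm] <;> ring

theorem conj_mul_self (x : Quat) : conj x * x = of (nrm x) := by
  ext1 <;> simp only [mul_p, mul_q, mul_r, mul_s, conj_p, conj_q, conj_r, conj_s, of_p, of_q, of_r,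
    of_s, nrm] <;> ring

theorem add_conj (x : Quat) : x + conj x = of (tr x) := by
  ext1 <;> simp [tr] <;> ring

theorem conj_conj (x : Quat) : conj (conj x) = x := by
  ext1 <;> simp <;> ring

theorem conj_mul (x y : Quat) : conj (x * y) = conj y * conj x := by
  ext1 <;> simp <;> ring

theorem nrm_mul (x y : Quat) : nrm (x * y) = nrm x * nrm y := by
  simp only [nrm, mul_p, mul_q, mul_r, mul_s]; ring

theorem nrm_of (x : ℤ√2) : nrm (of x) = x ^ 2 := by simp [nrm]

theorem nrm_conj (x : Quat) : nrm (conj x) = nrm x := by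
  simp only [nrm, conj_p, conj_q, conj_r, conj_s]; ring

theorem nrm_add (x y : Quat) : nrm (x + y) = nrm x + nrm y + tr (x * conj y) := by
  simp only [nrm, tr, conj_p, conj_q, conj_r, conj_s, mul_p, mul_q, mul_r, mul_s, add_p, add_q,
    add_r, add_s]; ring

theorem tr_of_mul (c : ℤ√2) (x : Quat) : tr (of c * x) = c * tr x := by
  simp [tr]; ring

theorem tr_conj (x : Quat) : tr (conj x) = tr x := by
  simp [tr]; ring

theorem nrm_TP {x : Quat} (hx : x ≠ 0) : TP (nrm x) := by
  have h4 : 4 * nrm x = (2 * x.p + rt * x.q + rt * x.r + x.s) ^ 2 + (rt * x.q + x.s) ^ 2 +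
      (rt * x.r + x.s) ^ 2 + x.s ^ 2 := by
    simp only [nrm]
    linear_combination (-2 * x.q ^ 2 - 2 * x.r ^ 2 + 2 * x.q * x.r) * rt_sq
  have h4T : TP (4 : ℤ√2) := by exact_mod_cast TP.intCast (n := 4) (by norm_num)
  refine h4T.of_mul ?_
  rw [h4]
  by_cases hs : x.s = 0
  · by_cases hr : x.r = 0
    · by_cases hq : x.q = 0
      · have hp : x.p ≠ 0 := fun hp => hx (by ext1 <;> assumption)
        rw [hq, hr, hs]
        have h2 : (2 : ℤ√2) * x.p ≠ 0 := mul_ne_zero (by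
          intro h; simpa using congrArg Zsqrtd.re h) hp
        simpa using TP.sq h2
      · rw [add_assoc, add_assoc, add_left_comm]
        refine (TP.sq ?_).add_TN ((TN.sq _).add ((TN.sq _).add (TN.sq _)))
        rw [hs, add_zero]
        exact mul_ne_zero rt_ne hq
    · rw [add_assoc, add_comm]
      refine ((TP.sq ?_).add_TN (TN.sq _)).add_TN ((TN.sq _).add (TN.sq _))
      rw [hs, add_zero]
      exact mul_ne_zero rt_ne hr
  · rw [add_comm]
    exact (TP.sq hs).add_TN (((TN.sq _).add (TN.sq _)).add (TN.sq _))

theorem eq_zero_of_mul {x y : Quat} (h : x * y = 0) (hy : y ≠ 0) : x = 0 := by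
  by_contra hx
  have := congrArg nrm h
  rw [nrm_mul] at this
  have h0 : nrm (0 : Quat) = 0 := by simp [nrm]
  rw [h0] at this
  exact mul_ne_zero (nrm_TP hx).ne_zero (nrm_TP hy).ne_zero this

/-! ### Euclidean division in the quaternion order -/

theorem round_even_aux {M v0 v1 v2 v3 : ℤ} (h0 : 2 * |v0| ≤ M) (h1 : |v1| ≤ |v0|)
    (h2 : |v2| ≤ |v0|) (h3 : |v3| ≤ |v0|) :
    ∃ d : ℤ, Odd d ∧ (v0 - M * d) ^ 2 + v1 ^ 2 + v2 ^ 2 + v3 ^ 2 ≤ M ^ 2 := by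
  have e1 := sq_le_sq.2 h1
  have e2 := sq_le_sq.2 h2
  have e3 := sq_le_sq.2 h3
  rcases abs_cases v0 with ⟨h, h'⟩ | ⟨h, h'⟩
  · exact ⟨1, by decide, by rw [h] at h0; nlinarith⟩
  · exact ⟨-1, by decide, by rw [h] at h0; nlinarith⟩

/-- Every point of `ℤ⁴` is within distance `M` of a vector of `M·D₄`. -/
theorem round_even (M : ℤ) (hM : 0 < M) (V0 V1 V2 V3 : ℤ) : ∃ k0 k1 k2 k3 : ℤ,
    Even (k0 + k1 + k2 + k3) ∧
    (V0 - M * k0) ^ 2 + (V1 - M * k1) ^ 2 + (V2 - M * k2) ^ 2 + (V3 - M * k3) ^ 2 ≤ M ^ 2 := by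
  have rd : ∀ V : ℤ, ∃ k : ℤ, 2 * |V - M * k| ≤ M := fun V => by
    obtain ⟨q, hq⟩ := exists_round V M hM
    exact ⟨q, by rwa [mul_comm M]⟩
  obtain ⟨k0, h0⟩ := rd V0
  obtain ⟨k1, h1⟩ := rd V1
  obtain ⟨k2, h2⟩ := rd V2
  obtain ⟨k3, h3⟩ := rd V3
  rcases Int.even_or_odd (k0 + k1 + k2 + k3) with he | ho
  · refine ⟨k0, k1, k2, k3, he, ?_⟩
    have sq : ∀ v : ℤ, 2 * |v| ≤ M → 4 * v ^ 2 ≤ M ^ 2 := fun v hv => by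
      have := abs_nonneg v
      rw [← sq_abs v]; nlinarith
    linarith [sq _ h0, sq _ h1, sq _ h2, sq _ h3]
  have fin : ∀ d : ℤ, Odd d → Even (k0 + k1 + k2 + k3 + d) := fun d hd => ho.add_odd hd
  rcases le_total |V0 - M * k0| |V1 - M * k1| with h01 | h01 <;>
  rcases le_total |V2 - M * k2| |V3 - M * k3| with h23 | h23
  · rcases le_total |V1 - M * k1| |V3 - M * k3| with h | h
    · obtain ⟨d, hd, hle⟩ := round_even_aux h3 (h01.trans h) h h23
      exact ⟨k0, k1, k2, k3 + d, by convert fin d hd using 1; ring, by linarith⟩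
    · obtain ⟨d, hd, hle⟩ := round_even_aux h1 h01 (h23.trans h) h
      exact ⟨k0, k1 + d, k2, k3, by convert fin d hd using 1; ring, by linarith⟩
  · rcases le_total |V1 - M * k1| |V2 - M * k2| with h | h
    · obtain ⟨d, hd, hle⟩ := round_even_aux h2 (h01.trans h) h h23
      exact ⟨k0, k1, k2 + d, k3, by convert fin d hd using 1; ring, by linarith⟩
    · obtain ⟨d, hd, hle⟩ := round_even_aux h1 h01 (h23.trans h) h
      exact ⟨k0, k1 + d, k2, k3, by convert fin d hd using 1; ring, by linarith⟩
  · rcases le_total |V0 - M * k0| |V3 - M * k3| with h | h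
    · obtain ⟨d, hd, hle⟩ := round_even_aux h3 (h01.trans h) h h23
      exact ⟨k0, k1, k2, k3 + d, by convert fin d hd using 1; ring, by linarith⟩
    · obtain ⟨d, hd, hle⟩ := round_even_aux h0 h01 (h23.trans h) h
      exact ⟨k0 + d, k1, k2, k3, by convert fin d hd using 1; ring, by linarith⟩
  · rcases le_total |V0 - M * k0| |V2 - M * k2| with h | h
    · obtain ⟨d, hd, hle⟩ := round_even_aux h2 (h01.trans h) h h23
      exact ⟨k0, k1, k2 + d, k3, by convert fin d hd using 1; ring, by linarith⟩
    · obtain ⟨d, hd, hle⟩ := round_even_aux h0 h01 (h23.trans h) h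
      exact ⟨k0 + d, k1, k2, k3, by convert fin d hd using 1; ring, by linarith⟩

/-- One coordinate has a residue `a` with an even quotient and a residue `b` with an odd quotient
such that `a² + b² ≤ M²`; in the case of equality the signs can be adapted to a given `v`. -/
theorem round_pair (M : ℤ) (hM : 0 < M) (U v : ℤ) : ∃ l l' : ℤ,
    (U - M * (2 * l)) ^ 2 + (U - M * (2 * l' + 1)) ^ 2 ≤ M ^ 2 ∧
    ((U - M * (2 * l)) ^ 2 + (U - M * (2 * l' + 1)) ^ 2 = M ^ 2 →
      (U - M * (2 * l)) * v + (U - M * (2 * l' + 1)) * v = M * |v|) := by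
  have h1 := Int.emod_nonneg U (show 2 * M ≠ 0 by omega)
  have h2 := Int.emod_lt_of_pos U (show 0 < 2 * M by omega)
  have h3 := Int.emod_add_mul_ediv U (2 * M)
  generalize U % (2 * M) = a at *
  generalize U / (2 * M) = l at *
  obtain rfl : U = a + 2 * M * l := h3.symm
  rcases eq_or_ne a 0 with rfl | ha0
  · rcases le_total 0 v with hv | hv
    · refine ⟨l, l - 1, by nlinarith, fun _ => ?_⟩
      rw [abs_of_nonneg hv]; ring
    · refine ⟨l, l, by nlinarith, fun _ => ?_⟩
      rw [abs_of_nonpos hv]; ring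
  rcases eq_or_ne a M with rfl | haM
  · rcases le_total 0 v with hv | hv
    · refine ⟨l, l, by nlinarith, fun _ => ?_⟩
      rw [abs_of_nonneg hv]; ring
    · refine ⟨l + 1, l, by nlinarith, fun _ => ?_⟩
      rw [abs_of_nonpos hv]; ring
  have key : ∀ x y : ℤ, x ^ 2 + y ^ 2 < M ^ 2 → x ^ 2 + y ^ 2 ≤ M ^ 2 ∧
      (x ^ 2 + y ^ 2 = M ^ 2 → x * v + y * v = M * |v|) :=
    fun x y h => ⟨h.le, fun h' => absurd h' h.ne⟩
  have hapos : 0 < a := by omega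
  rcases lt_or_gt_of_ne haM with h | h
  · refine ⟨l, l, key _ _ ?_⟩
    nlinarith [mul_pos hapos (sub_pos.2 h)]
  · refine ⟨l + 1, l, key _ _ ?_⟩
    nlinarith [mul_pos (sub_pos.2 h) (sub_pos.2 h2)]

/-- For `S = |u|²`, `T = |v|²`, `X = u ⬝ v`, the left hand side is the product of the conjugates
`|u ± √2 v|² = S + 2T ± 2√2 X`. -/
theorem strict_aux {M S T X : ℤ} (hM : 0 < M) (hS0 : 0 ≤ S) (hT0 : 0 ≤ T) (hS : S ≤ 2 * M ^ 2)
    (hT : T ≤ M ^ 2) (h : S < 2 * M ^ 2 ∨ T < M ^ 2 ∨ X ≠ 0) :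
    (S + 2 * T) ^ 2 - 8 * X ^ 2 < 16 * M ^ 4 := by
  have hX := sq_nonneg X
  have e : 16 * M ^ 4 = (4 * M ^ 2) ^ 2 := by ring
  rw [e]
  rcases h with h | h | h
  · nlinarith
  · nlinarith
  · have : 0 < X ^ 2 := by positivity
    nlinarith

/-- The vector `U` can be reduced by `M` times a vector with coordinates of equal parity, so that
the product of the two conjugates `|U - Mj ± √2 v|²` is less than `16M⁴`. -/
theorem reduce_parity (M : ℤ) (hM : 0 < M) (U0 U1 U2 U3 v0 v1 v2 v3 : ℤ)
    (hT : v0 ^ 2 + v1 ^ 2 + v2 ^ 2 + v3 ^ 2 ≤ M ^ 2) :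
    ∃ j0 j1 j2 j3 c0 c1 c2 : ℤ, j0 = j3 + 2 * c0 ∧
      j1 = j3 + 2 * c1 ∧ j2 = j3 + 2 * c2 ∧
      (((U0 - M * j0) ^ 2 + (U1 - M * j1) ^ 2 + (U2 - M * j2) ^ 2 + (U3 - M * j3) ^ 2)
        + 2 * (v0 ^ 2 + v1 ^ 2 + v2 ^ 2 + v3 ^ 2)) ^ 2
        - 8 * ((U0 - M * j0) * v0 + (U1 - M * j1) * v1 + (U2 - M * j2) * v2
          + (U3 - M * j3) * v3) ^ 2 < 16 * M ^ 4 := by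
  obtain ⟨l0, l0', A0, E0⟩ := round_pair M hM U0 v0
  obtain ⟨l1, l1', A1, E1⟩ := round_pair M hM U1 v1
  obtain ⟨l2, l2', A2, E2⟩ := round_pair M hM U2 v2
  obtain ⟨l3, l3', A3, E3⟩ := round_pair M hM U3 v3
  have hT0 : 0 ≤ v0 ^ 2 + v1 ^ 2 + v2 ^ 2 + v3 ^ 2 := by positivity
  set SA := (U0 - M * (2 * l0)) ^ 2 + (U1 - M * (2 * l1)) ^ 2 + (U2 - M * (2 * l2)) ^ 2 +
    (U3 - M * (2 * l3)) ^ 2 with hSA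
  set SB := (U0 - M * (2 * l0' + 1)) ^ 2 + (U1 - M * (2 * l1' + 1)) ^ 2 +
    (U2 - M * (2 * l2' + 1)) ^ 2 + (U3 - M * (2 * l3' + 1)) ^ 2 with hSB
  set XA := (U0 - M * (2 * l0)) * v0 + (U1 - M * (2 * l1)) * v1 + (U2 - M * (2 * l2)) * v2 +
    (U3 - M * (2 * l3)) * v3 with hXA
  set XB := (U0 - M * (2 * l0' + 1)) * v0 + (U1 - M * (2 * l1' + 1)) * v1 +
    (U2 - M * (2 * l2' + 1)) * v2 + (U3 - M * (2 * l3' + 1)) * v3 with hXB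
  have hSA0 : 0 ≤ SA := by positivity
  have hSB0 : 0 ≤ SB := by positivity
  have hsum : SA + SB ≤ 4 * M ^ 2 := by rw [hSA, hSB]; linarith
  have useA : SA ≤ 2 * M ^ 2 →
      (SA < 2 * M ^ 2 ∨ v0 ^ 2 + v1 ^ 2 + v2 ^ 2 + v3 ^ 2 < M ^ 2 ∨ XA ≠ 0) →
      ∃ j0 j1 j2 j3 c0 c1 c2 : ℤ, j0 = j3 + 2 * c0 ∧
      j1 = j3 + 2 * c1 ∧ j2 = j3 + 2 * c2 ∧
      (((U0 - M * j0) ^ 2 + (U1 - M * j1) ^ 2 + (U2 - M * j2) ^ 2 + (U3 - M * j3) ^ 2)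
        + 2 * (v0 ^ 2 + v1 ^ 2 + v2 ^ 2 + v3 ^ 2)) ^ 2
        - 8 * ((U0 - M * j0) * v0 + (U1 - M * j1) * v1 + (U2 - M * j2) * v2
          + (U3 - M * j3) * v3) ^ 2 < 16 * M ^ 4 := fun h1 h2 =>
    ⟨2 * l0, 2 * l1, 2 * l2, 2 * l3, l0 - l3, l1 - l3, l2 - l3, by ring, by ring, by ring,
      strict_aux hM hSA0 hT0 h1 hT h2⟩
  have useB : SB ≤ 2 * M ^ 2 →
      (SB < 2 * M ^ 2 ∨ v0 ^ 2 + v1 ^ 2 + v2 ^ 2 + v3 ^ 2 < M ^ 2 ∨ XB ≠ 0) →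
      ∃ j0 j1 j2 j3 c0 c1 c2 : ℤ, j0 = j3 + 2 * c0 ∧
      j1 = j3 + 2 * c1 ∧ j2 = j3 + 2 * c2 ∧
      (((U0 - M * j0) ^ 2 + (U1 - M * j1) ^ 2 + (U2 - M * j2) ^ 2 + (U3 - M * j3) ^ 2)
        + 2 * (v0 ^ 2 + v1 ^ 2 + v2 ^ 2 + v3 ^ 2)) ^ 2
        - 8 * ((U0 - M * j0) * v0 + (U1 - M * j1) * v1 + (U2 - M * j2) * v2
          + (U3 - M * j3) * v3) ^ 2 < 16 * M ^ 4 := fun h1 h2 =>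
    ⟨2 * l0' + 1, 2 * l1' + 1, 2 * l2' + 1, 2 * l3' + 1, l0' - l3', l1' - l3', l2' - l3',
      by ring, by ring, by ring,
      strict_aux hM hSB0 hT0 h1 hT h2⟩
  rcases lt_or_ge SA (2 * M ^ 2) with h1 | h1
  · exact useA h1.le (Or.inl h1)
  rcases lt_or_ge SB (2 * M ^ 2) with h2 | h2
  · exact useB h2.le (Or.inl h2)
  have hA : SA = 2 * M ^ 2 := by linarith
  have hB : SB = 2 * M ^ 2 := by linarith
  rcases lt_or_ge (v0 ^ 2 + v1 ^ 2 + v2 ^ 2 + v3 ^ 2) (M ^ 2) with h3 | h3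
  · exact useA hA.le (Or.inr (Or.inl h3))
  by_cases hXA0 : XA = 0
  · refine useB hB.le (Or.inr (Or.inr fun hXB0 => ?_))
    have hX : XA + XB = M * (|v0| + |v1| + |v2| + |v3|) := by
      rw [hXA, hXB]
      have f0 := E0 (by linarith)
      have f1 := E1 (by linarith)
      have f2 := E2 (by linarith)
      have f3 := E3 (by linarith)
      linarith
    rw [hXA0, hXB0] at hX
    have h4 : |v0| + |v1| + |v2| + |v3| = 0 := by
      rcases mul_eq_zero.1 (show M * (|v0| + |v1| + |v2| + |v3|) = 0 by linarith) with h | h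
      · omega
      · exact h
    have n0 := abs_nonneg v0
    have n1 := abs_nonneg v1
    have n2 := abs_nonneg v2
    have n3 := abs_nonneg v3
    have z0 : v0 = 0 := abs_eq_zero.1 (by omega)
    have z1 : v1 = 0 := abs_eq_zero.1 (by omega)
    have z2 : v2 = 0 := abs_eq_zero.1 (by omega)
    have z3 : v3 = 0 := abs_eq_zero.1 (by omega)
    rw [z0, z1, z2, z3] at h3
    have : 0 < M ^ 2 := by positivity
    linarith
  · exact useA hA.le (Or.inr (Or.inr hXA0))

/-- The order is Euclidean: writing twice the vector of Hamilton coordinates as `U + √2 V` with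
`U`, `V` in `ℤ⁴`, reduce `V` by `round_even`, then `U` by `reduce_parity`. -/
theorem exists_approx (z : Quat) (M : ℤ) (hM : 0 < M) :
    ∃ q : Quat, (nrm (z - of (M : ℤ√2) * q)).norm < M ^ 4 := by
  obtain ⟨⟨p0, p1⟩, ⟨q0, q1⟩, ⟨r0, r1⟩, ⟨s0, s1⟩⟩ := z
  set U0 := 2 * p0 + 2 * q1 + 2 * r1 + s0 with hU0
  set U1 := 2 * q1 + s0 with hU1
  set U2 := 2 * r1 + s0 with hU2
  set V0 := 2 * p1 + q0 + r0 + s1 with hV0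
  set V1 := q0 + s1 with hV1
  set V2 := r0 + s1 with hV2
  obtain ⟨k0, k1, k2, k3, ⟨e, he⟩, hT⟩ := round_even M hM V0 V1 V2 s1
  set v0 := V0 - M * k0 with hv0
  set v1 := V1 - M * k1 with hv1
  set v2 := V2 - M * k2 with hv2
  set v3 := s1 - M * k3 with hv3
  have h : ∃ j0 j1 j2 j3 c0 c1 c2 : ℤ, j0 = j3 + 2 * c0 ∧ j1 = j3 + 2 * c1 ∧ j2 = j3 + 2 * c2 ∧
      (((U0 - M * j0) ^ 2 + (U1 - M * j1) ^ 2 + (U2 - M * j2) ^ 2 + (s0 - M * j3) ^ 2)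
        + 2 * (v0 ^ 2 + v1 ^ 2 + v2 ^ 2 + v3 ^ 2)) ^ 2
        - 8 * ((U0 - M * j0) * v0 + (U1 - M * j1) * v1 + (U2 - M * j2) * v2
          + (s0 - M * j3) * v3) ^ 2 < 16 * M ^ 4 :=
    reduce_parity M hM U0 U1 U2 s0 v0 v1 v2 v3 hT
  obtain ⟨j0, j1, j2, j3, c0, c1, c2, rfl, rfl, rfl, h⟩ := h
  refine ⟨⟨⟨c0 - c1 - c2, e - k1 - k2⟩, ⟨k1 - k3, c1⟩, ⟨k2 - k3, c2⟩, ⟨j3, k3⟩⟩, ?_⟩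
  have hk0 : k0 = 2 * e - k1 - k2 - k3 := by omega
  have key : 16 * (nrm ((⟨⟨p0, p1⟩, ⟨q0, q1⟩, ⟨r0, r1⟩, ⟨s0, s1⟩⟩ : Quat) - of (M : ℤ√2) *
      ⟨⟨c0 - c1 - c2, e - k1 - k2⟩, ⟨k1 - k3, c1⟩, ⟨k2 - k3, c2⟩, ⟨j3, k3⟩⟩)).norm =
      (((U0 - M * (j3 + 2 * c0)) ^ 2 + (U1 - M * (j3 + 2 * c1)) ^ 2 +
        (U2 - M * (j3 + 2 * c2)) ^ 2 + (s0 - M * j3) ^ 2)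
      + 2 * (v0 ^ 2 + v1 ^ 2 + v2 ^ 2 + v3 ^ 2)) ^ 2
      - 8 * ((U0 - M * (j3 + 2 * c0)) * v0 + (U1 - M * (j3 + 2 * c1)) * v1 +
        (U2 - M * (j3 + 2 * c2)) * v2 + (s0 - M * j3) * v3) ^ 2 := by
    rw [norm_two]
    simp only [nrm, rt, pow_two, sub_p, sub_q, sub_r, sub_s, mul_p, mul_q, mul_r, mul_s, of_p,
      of_q, of_r, of_s, Zsqrtd.re_add, Zsqrtd.im_add, Zsqrtd.re_mul, Zsqrtd.im_mul,
      Zsqrtd.re_sub, Zsqrtd.im_sub, Zsqrtd.re_intCast, Zsqrtd.im_intCast, Zsqrtd.re_one,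
      Zsqrtd.im_one, Zsqrtd.re_zero, Zsqrtd.im_zero, hv0, hv1, hv2, hv3, hU0, hU1, hU2, hV0, hV1,
      hV2, hk0]
    ring
  rw [← key] at h
  linarith

theorem exists_quotient (x y : Quat) (hy : y ≠ 0) :
    ∃ q : Quat, (nrm (x - q * y)).norm < (nrm y).norm := by
  have hT := nrm_TP hy
  set M := (nrm y).norm with hM
  obtain ⟨q, hq⟩ := exists_approx (x * conj y * of (star (nrm y))) M hT.2
  refine ⟨q, ?_⟩
  have key : (x - q * y) * (conj y * of (star (nrm y))) =
      x * conj y * of (star (nrm y)) - of (M : ℤ√2) * q := by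
    rw [sub_mul, mul_assoc q, ← mul_assoc y, mul_conj, ← map_mul, mul_star_self, ← hM, mul_assoc,
      of_comm (M : ℤ√2) q]
  rw [← key, nrm_mul, nrm_mul, nrm_conj, nrm_of, pow_two, Zsqrtd.norm_mul, Zsqrtd.norm_mul,
    Zsqrtd.norm_mul, Zsqrtd.norm_conj, ← hM] at hq
  have hM3 : 0 < M * (M * M) := by have := hT.2; positivity
  refine lt_of_mul_lt_mul_right (a := M * (M * M)) ?_ hM3.le
  calc _ < M ^ 4 := hq
    _ = _ := by ring

theorem bezout_aux (n : ℕ) : ∀ x y : Quat, (nrm y).norm.toNat ≤ n →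
    ∃ g u v p q : Quat, g = u * x + v * y ∧ x = p * g ∧ y = q * g := by
  induction n using Nat.strong_induction_on with
  | _ n ih =>
    intro x y hn
    rcases eq_or_ne y 0 with rfl | hy
    · exact ⟨x, 1, 0, 1, 0, by simp, by simp, by simp⟩
    obtain ⟨q, hq⟩ := exists_quotient x y hy
    have hpos := (nrm_TP hy).2
    obtain ⟨g, u, v, a, b, h1, h2, h3⟩ := ih (nrm (x - q * y)).norm.toNat (by omega) y (x - q * y)
      le_rfl
    refine ⟨g, v, u - v * q, b + q * a, a, ?_, ?_, h2⟩
    · rw [h1]; noncomm_ring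
    · rw [add_mul, ← h3, mul_assoc, ← h2]; noncomm_ring

/-- Left ideals with two generators are principal. -/
theorem bezout (x y : Quat) :
    ∃ g u v p q : Quat, g = u * x + v * y ∧ x = p * g ∧ y = q * g :=
  bezout_aux _ x y le_rfl

end Quat
end FourSq

/-! ### Binary forms represented by the reduced norm -/

namespace FourSq
open Zsqrtd
namespace Quat

theorem add_tr (x y : Quat) : tr (x + y) = tr x + tr y := by
  simp only [tr, add_p, add_q, add_r, add_s]; ring

theorem tr_sandwich (g x : Quat) : tr (g * x * conj g) = nrm g * tr x := by
  apply of_inj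
  rw [← add_conj, conj_mul, conj_mul, conj_conj, map_mul, ← add_conj x, ← mul_conj]
  have h : g * conj g * (x + conj x) = g * (x + conj x) * conj g := by
    rw [add_conj, mul_assoc, ← of_comm, ← mul_assoc]
  rw [h]
  noncomm_ring

theorem sq_eq (x : Quat) : x * x = of (tr x) * x - of (nrm x) := by
  rw [← add_conj, ← conj_mul_self]; noncomm_ring

theorem of_mul_left_cancel {c : ℤ√2} (hc : c ≠ 0) {x y : Quat} (h : of c * x = of c * y) :
    x = y := by
  rw [← sub_eq_zero]
  refine eq_zero_of_mul (y := of c) ?_ (fun h0 => hc (by simpa using congrArg p h0))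
  rw [← of_comm, mul_sub, h, sub_self]

/-- The order contains an element of trace `β` and norm `m` as soon as `4m - β²` is totally
positive: a quaternion `(wβ + v)/2w` with these invariants exists over the fraction field, and
conjugating it by a generator of the left ideal generated by `2w` and `wβ + v` makes it
integral. -/
theorem exists_tr_nrm {β m : ℤ√2} (hΔ : TP (4 * m - β ^ 2)) :
    ∃ y : Quat, nrm y = m ∧ tr y = β := by
  obtain ⟨w, X, Y, Z, hw, hXYZ⟩ := hΔ.threeSq
  obtain ⟨θ, hθt, hθn⟩ : ∃ θ : Quat, tr θ = 2 * w * β ∧ nrm θ = (2 * w) ^ 2 * m := by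
    refine ⟨⟨w * β - X - Y + Z, rt * (X - Z), rt * (Y - Z), 2 * Z⟩, ?_, ?_⟩
    · simp only [tr]
      linear_combination (X + Y - 2 * Z) * rt_sq
    · simp only [nrm]
      have h2 := rt_sq
      generalize rt = t at h2 ⊢
      have e1 : t ^ 2 = 2 := by rw [pow_two, h2]
      have e4 : t ^ 4 = 4 := by linear_combination (t ^ 2 + 2) * e1
      ring_nf
      simp only [e1, e4]
      linear_combination -hXYZ
  have h2 : (2 : ℤ√2) ≠ 0 := by intro h; simpa using congrArg Zsqrtd.re h
  have h2w : 2 * w ≠ 0 := mul_ne_zero h2 hw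
  generalize 2 * w = W at *
  obtain ⟨G, u, t, p, q, hG, hp, hq⟩ := bezout (of W) θ
  have hG0 : G ≠ 0 := by
    rintro rfl
    rw [mul_zero] at hp
    exact h2w (by simpa using congrArg Quat.p hp)
  have hNG := (nrm_TP hG0).ne_zero
  refine ⟨(u + t * of β) * q - t * of m * p, ?_⟩
  set y := (u + t * of β) * q - t * of m * p with hy
  have key : G * θ = of W * y * G := by
    have h1 : y * G = (u + t * of β) * θ - t * of m * of W := by
      rw [hy, sub_mul, mul_assoc _ q, ← hq, mul_assoc _ p, ← hp]
    have h2 : t * (of W * (of β * θ)) = of W * (t * (of β * θ)) := by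
      rw [← mul_assoc, ← of_comm, mul_assoc]
    have h3 : t * (of W * (of W * of m)) = of W * (t * (of m * of W)) := by
      rw [← mul_assoc, ← of_comm, mul_assoc, of_comm m]
    rw [mul_assoc, h1, hG, add_mul, mul_assoc t, sq_eq, hθt, hθn]
    simp only [map_mul, pow_two, mul_sub, add_mul, mul_add, mul_assoc]
    rw [← h2, ← h3, ← mul_assoc u, ← of_comm, mul_assoc, add_sub_assoc]
  constructor
  · have := congrArg nrm key
    rw [nrm_mul, nrm_mul, nrm_mul, nrm_of, hθn] at this
    refine mul_left_cancel₀ (mul_ne_zero hNG (pow_ne_zero 2 h2w)) ?_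
    linear_combination -this
  · have h1 : G * θ * conj G = of (W * nrm G) * y := by
      rw [key, mul_assoc, mul_conj, ← of_comm, ← mul_assoc, ← map_mul, mul_comm]
    have := congrArg tr h1
    rw [tr_sandwich, tr_of_mul, hθt] at this
    refine mul_left_cancel₀ (mul_ne_zero hNG h2w) ?_
    linear_combination -this

/-- For a primitive form, take `y` of trace `β` and norm `αγ`. The left ideal generated by `α` and
`y` is principal, generated by some `g`; the cofactors of `α` and `y` span the form up to a factor
`m` which primitivity forces to be a totally positive unit, hence a square. -/
theorem rep_primitive {α β γ e1 e2 e3 : ℤ√2} (hα : TP α) (hΔ : TP (4 * (α * γ) - β ^ 2))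
    (he : e1 * α + e2 * β + e3 * γ = 1) :
    ∃ a b : Quat, nrm a = α ∧ nrm b = γ ∧ tr (a * conj b) = β := by
  obtain ⟨y, hyn, hyt⟩ := exists_tr_nrm hΔ
  obtain ⟨g, u, t, p, q, hg, hp, hq⟩ := bezout (of α) y
  have hα0 := hα.ne_zero
  obtain ⟨m, hm⟩ : ∃ m, nrm g = α * m := by
    refine ⟨nrm u * α + nrm t * γ + tr (u * conj (t * y)), ?_⟩
    rw [hg, nrm_add, nrm_mul, nrm_mul, hyn, nrm_of, ← of_comm, mul_assoc, tr_of_mul]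
    ring
  have h1 : α = nrm p * m := by
    have := congrArg nrm hp
    rw [nrm_mul, nrm_of, hm] at this
    refine mul_left_cancel₀ hα0 ?_
    linear_combination this
  have h2 : γ = nrm q * m := by
    have := congrArg nrm hq
    rw [nrm_mul, hyn, hm] at this
    refine mul_left_cancel₀ hα0 ?_
    linear_combination this
  have h3 : β = tr (p * conj q) * m := by
    have e : of α * conj y = of (nrm g) * (p * conj q) := by
      rw [hp, hq, conj_mul, mul_assoc, ← mul_assoc g, mul_conj, ← mul_assoc, ← of_comm, mul_assoc]
    have := congrArg tr e
    rw [tr_of_mul, tr_of_mul, tr_conj, hyt, hm] at this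
    refine mul_left_cancel₀ hα0 ?_
    linear_combination this
  have hmT : TP m := by
    refine hα.of_mul ?_
    rw [← hm]
    refine nrm_TP ?_
    rintro rfl
    rw [mul_zero] at hp
    exact hα0 (by simpa using congrArg Quat.p hp)
  have hunit : m * (e1 * nrm p + e2 * tr (p * conj q) + e3 * nrm q) = 1 := by
    rw [← he]
    linear_combination -e1 * h1 - e2 * h3 - e3 * h2
  have hmn : m.norm = 1 := by
    have := congrArg Zsqrtd.norm hunit
    rw [Zsqrtd.norm_mul, Zsqrtd.norm_one] at this
    exact Int.eq_one_of_mul_eq_one_right hmT.2.le this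
  obtain ⟨η, -, -, rfl⟩ := hmT.unit_sq hmn
  refine ⟨of η * p, of η * q, ?_, ?_, ?_⟩
  · rw [nrm_mul, nrm_of, h1]; ring
  · rw [nrm_mul, nrm_of, h2]; ring
  · have : of η * p * conj (of η * q) = of (η ^ 2) * (p * conj q) := by
      have hc : conj (of η) = of η := by ext1 <;> simp
      rw [conj_mul, hc, ← of_comm, mul_assoc, ← mul_assoc p, ← of_comm η p, mul_assoc, ← mul_assoc,
        ← map_mul, ← pow_two]
    rw [this, tr_of_mul, h3]; ring

/-- A totally positive definite binary form over `ℤ[√2]` is the restriction of the reduced norm to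
a pair of elements of the order. -/
theorem rep {α β γ : ℤ√2} (hα : TP α) (hΔ : TP (4 * (α * γ) - β ^ 2)) :
    ∃ a b : Quat, nrm a = α ∧ nrm b = γ ∧ tr (a * conj b) = β := by
  obtain ⟨g, u, v, p, q, hg, -, hp, hq, huv⟩ := bezout_TP α β hα.ne_zero
  obtain ⟨c, u', v', p', q', hc, -, hp', hq', huv'⟩ := bezout_TP g γ hg.ne_zero
  obtain ⟨a₀, b₀, ha, hb, hab⟩ := rep_primitive (α := p * p') (β := q * p') (γ := q')
    (e1 := u' * u) (e2 := u' * v) (e3 := v')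
    (hc.of_mul (by convert hα using 1; rw [hp, hp']; ring))
    ((hc.mul hc).of_mul (by convert hΔ using 1; rw [hp, hq, hq', hp']; ring))
    (by linear_combination u' * p' * huv + huv')
  obtain ⟨κ, _, hκ, -, -⟩ := rep_primitive (α := c) (β := 0) (γ := 1) (e1 := 0) (e2 := 0) (e3 := 1)
    hc (by
      have h4T : TP (4 : ℤ√2) := by exact_mod_cast TP.intCast (n := 4) (by norm_num)
      convert h4T.mul hc using 1; ring) (by ring)
  refine ⟨κ * a₀, κ * b₀, ?_, ?_, ?_⟩
  · rw [nrm_mul, hκ, ha, hp, hp']; ring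
  · rw [nrm_mul, hκ, hb]; linear_combination -hq'
  · rw [conj_mul, ← mul_assoc, mul_assoc κ, tr_sandwich, hκ, hab, hq, hp']; ring

end Quat
end FourSq

/-! ### The order modulo `√2` and the Lipschitz order -/

namespace FourSq
open Zsqrtd

/-- Reduction of `ℤ[√2]` modulo the prime `√2`. -/
def res : ℤ√2 →+* ZMod 2 where
  toFun x := (x.re : ZMod 2)
  map_zero' := by simp
  map_one' := by simp
  map_add' x y := by simp
  map_mul' x y := by
    have h : (2 : ZMod 2) = 0 := by decide
    simp [h]

theorem res_def (x : ℤ√2) : res x = (x.re : ZMod 2) := rfl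

@[simp] theorem res_rt : res rt = 0 := by simp [res, rt]

theorem res_eq_zero {x : ℤ√2} : res x = 0 ↔ ∃ y, x = rt * y := by
  constructor
  · intro h
    rw [res_def, ZMod.intCast_zmod_eq_zero_iff_dvd] at h
    obtain ⟨k, hk⟩ := h
    refine ⟨⟨x.im, k⟩, ?_⟩
    ext <;> simp [rt] <;> omega
  · rintro ⟨y, rfl⟩
    simp

theorem res_eq_one {x : ℤ√2} : res x = 1 ↔ Odd x.re := by
  rw [res_def, ZMod.intCast_eq_one_iff_odd]

theorem res_ne_one {x : ℤ√2} : res x ≠ 1 ↔ res x = 0 := by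
  generalize res x = y; revert y; decide

namespace Quat

/-- Membership in the Lipschitz order, spanned by `1`, `i`, `j` and `k`. -/
def Lip (x : Quat) : Prop := ∃ q r s : ℤ√2, x.q = rt * q ∧ x.r = rt * r ∧ x.s = 2 * s

/-- On the Lipschitz order the reduced norm is the sum of the squares of four coordinates in
`ℤ[√2]`. -/
theorem Lip.isSum {a b : Quat} (ha : Lip a) (hb : Lip b) :
    IsSumOfLinSq 4 (nrm a) (tr (a * conj b)) (nrm b) := by
  obtain ⟨p, _, _, _⟩ := a
  obtain ⟨p', _, _, _⟩ := b
  obtain ⟨q, r, s, hq, hr, hs⟩ := ha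
  obtain ⟨q', r', s', hq', hr', hs'⟩ := hb
  dsimp only at hq hr hs hq' hr' hs'
  subst hq hr hs hq' hr' hs'
  simp only [nrm, tr, conj_p, conj_q, conj_r, conj_s, mul_p, mul_q, mul_r, mul_s]
  have h2 := rt_sq
  generalize rt = t at h2 ⊢
  have e1 : t ^ 2 = 2 := by rw [pow_two, h2]
  have e4 : t ^ 4 = 4 := by linear_combination (t ^ 2 + 2) * e1
  refine ⟨![p + q + r + s, q + s, r + s, s], ![p' + q' + r' + s', q' + s', r' + s', s'], ?_, ?_, ?_⟩
  · simp [Fin.sum_univ_four]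
    ring_nf
    simp only [e1, e4]
    ring
  · simp [Fin.sum_univ_four]
    ring_nf
    simp only [e1, e4]
    ring
  · simp [Fin.sum_univ_four]
    ring_nf
    simp only [e1, e4]
    ring

theorem lip_rt_mul {x : Quat} (h : res x.s = 0) : Lip (of rt * x) := by
  obtain ⟨s, hs⟩ := res_eq_zero.1 h
  refine ⟨x.q, x.r, s, by simp, by simp, ?_⟩
  simp only [mul_s, of_p, of_q, of_r, of_s, hs]
  linear_combination s * rt_sq

theorem tr_mul_conj_mul (z a b : Quat) : tr (z * a * conj (z * b)) = nrm z * tr (a * conj b) := by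
  rw [conj_mul, ← mul_assoc, mul_assoc z, tr_sandwich]

theorem res_mul_s (z a : Quat) : res (z * a).s = res z.p * res a.s + res z.s * res a.p +
    res z.q * res a.r - res z.r * res a.q + res z.s * res a.s := by
  simp

theorem res_nrm (a : Quat) : res (nrm a) = res a.p ^ 2 + res a.q ^ 2 + res a.r ^ 2 + res a.s ^ 2 +
    res a.p * res a.s - res a.q * res a.r := by
  have h : (2 : ZMod 2) = 0 := by decide
  simp [nrm, -ZMod.pow_card]
  linear_combination res a.q * res a.r * h

theorem res_tr (a b : Quat) : res (tr (a * conj b)) = res a.p * res b.s + res a.s * res b.p +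
    res a.q * res b.r + res a.r * res b.q := by
  have h : (2 : ZMod 2) = 0 := by decide
  have h' : res 2 = 0 := by decide
  simp [tr, h']
  generalize res a.p = a1
  generalize res a.q = a2
  generalize res a.r = a3
  generalize res a.s = a4
  generalize res b.p = b1
  generalize res b.q = b2
  generalize res b.r = b3
  generalize res b.s = b4
  linear_combination a4 * b4 * h

/-- Representatives of norm `1` for the six classes of units modulo `√2`. -/
def unitRep : Fin 6 → Quat :=
  ![⟨1, 0, 0, 0⟩, ⟨0, 1, 0, 0⟩, ⟨0, 0, 1, 0⟩, ⟨0, 0, 0, 1⟩, ⟨0, 1, -1, 0⟩, ⟨1, 0, 0, -1⟩]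

/-- Representatives of norm `2 + √2` for the nine classes of rank-one elements modulo `√2`. -/
def rankOneRep : Fin 9 → Quat :=
  ![⟨1, 1, 0, 0⟩, ⟨1, 0, 1, 0⟩, ⟨0, 1, 0, 1⟩, ⟨0, 0, 1, 1⟩, ⟨0, -1, ⟨1, 1⟩, -1⟩,
    ⟨-1, 0, -1, ⟨1, 1⟩⟩, ⟨-1, -1, 0, ⟨1, 1⟩⟩, ⟨-1, -1, -1, ⟨0, 1⟩⟩, ⟨-1, -1, -1, ⟨1, 1⟩⟩]

theorem nrm_unitRep (i : Fin 6) : nrm (unitRep i) = 1 := by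
  revert i; decide

theorem nrm_rankOneRep (i : Fin 9) : nrm (rankOneRep i) = 2 + rt := by
  revert i; decide

/-- The coordinates of `unitRep` modulo `√2`. -/
def unitRepMod : Fin 6 → Fin 4 → ZMod 2 :=
  ![![1, 0, 0, 0], ![0, 1, 0, 0], ![0, 0, 1, 0], ![0, 0, 0, 1], ![0, 1, 1, 0], ![1, 0, 0, 1]]

/-- The coordinates of `rankOneRep` modulo `√2`. -/
def rankOneRepMod : Fin 9 → Fin 4 → ZMod 2 :=
  ![![1, 1, 0, 0], ![1, 0, 1, 0], ![0, 1, 0, 1], ![0, 0, 1, 1], ![0, 1, 1, 1], ![1, 0, 1, 1],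
    ![1, 1, 0, 1], ![1, 1, 1, 0], ![1, 1, 1, 1]]

theorem res_unitRep (i : Fin 6) : res (unitRep i).p = unitRepMod i 0 ∧
    res (unitRep i).q = unitRepMod i 1 ∧ res (unitRep i).r = unitRepMod i 2 ∧ res (unitRep i).s = unitRepMod i 3 := by
  revert i; decide

theorem res_rankOneRep (i : Fin 9) : res (rankOneRep i).p = rankOneRepMod i 0 ∧
    res (rankOneRep i).q = rankOneRepMod i 1 ∧ res (rankOneRep i).r = rankOneRepMod i 2 ∧ res (rankOneRep i).s = rankOneRepMod i 3 := by
  revert i; decide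

set_option maxRecDepth 100000 in
/-- The finite check behind `exists_unit_mul`. -/
theorem unit_table : ∀ a1 a2 a3 a4 b1 b2 b3 b4 : ZMod 2,
    (a1 ^ 2 + a2 ^ 2 + a3 ^ 2 + a4 ^ 2 + a1 * a4 - a2 * a3 = 0 ∧
      a1 * b4 + a4 * b1 + a2 * b3 + a3 * b2 = 0 ∧
      b1 ^ 2 + b2 ^ 2 + b3 ^ 2 + b4 ^ 2 + b1 * b4 - b2 * b3 = 0) ∨
    ∃ i, (unitRepMod i 0 * a4 + unitRepMod i 3 * a1 + unitRepMod i 1 * a3 - unitRepMod i 2 * a2 + unitRepMod i 3 * a4 = 0 ∧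
      unitRepMod i 0 * b4 + unitRepMod i 3 * b1 + unitRepMod i 1 * b3 - unitRepMod i 2 * b2 + unitRepMod i 3 * b4 = 0) := by
  decide +kernel

set_option maxRecDepth 100000 in
/-- The finite check behind `exists_rankOne_mul`. -/
theorem rankOne_table : ∀ a1 a2 a3 a4 b1 b2 b3 b4 : ZMod 2,
    (a1 ^ 2 + a2 ^ 2 + a3 ^ 2 + a4 ^ 2 + a1 * a4 - a2 * a3 = 1 ∧
      a1 * b4 + a4 * b1 + a2 * b3 + a3 * b2 = 1 ∧
      b1 ^ 2 + b2 ^ 2 + b3 ^ 2 + b4 ^ 2 + b1 * b4 - b2 * b3 = 1) ∨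
    ∃ i, (rankOneRepMod i 0 * a4 + rankOneRepMod i 3 * a1 + rankOneRepMod i 1 * a3 - rankOneRepMod i 2 * a2 + rankOneRepMod i 3 * a4 = 0 ∧
      rankOneRepMod i 0 * b4 + rankOneRepMod i 3 * b1 + rankOneRepMod i 1 * b3 - rankOneRepMod i 2 * b2 + rankOneRepMod i 3 * b4 = 0) := by
  decide +kernel

/-- The finite check behind `exists_unit_mul_one`. -/
theorem unit_inverse_table : ∀ a1 a2 a3 a4 : ZMod 2,
    a1 ^ 2 + a2 ^ 2 + a3 ^ 2 + a4 ^ 2 + a1 * a4 - a2 * a3 = 1 →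
    ∃ i, unitRepMod i 0 * a1 - unitRepMod i 1 * a2 + unitRepMod i 2 * a2 - unitRepMod i 2 * a3 - unitRepMod i 3 * a4 = 1 ∧
      unitRepMod i 0 * a2 + unitRepMod i 1 * a1 + unitRepMod i 2 * a4 + unitRepMod i 3 * a2 - unitRepMod i 3 * a3 = 0 ∧
      unitRepMod i 0 * a3 + unitRepMod i 2 * a1 - unitRepMod i 1 * a4 + unitRepMod i 2 * a4 + unitRepMod i 3 * a2 = 0 ∧
      unitRepMod i 0 * a4 + unitRepMod i 3 * a1 + unitRepMod i 1 * a3 - unitRepMod i 2 * a2 + unitRepMod i 3 * a4 = 0 := by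
  decide +kernel

/-- Left multiplication by a unit of the order moves a pair of elements into `√2⁻¹` times the
Lipschitz order, unless the form they span vanishes modulo `√2`. -/
theorem exists_unit_mul (a b : Quat)
    (h : ¬ (res (nrm a) = 0 ∧ res (tr (a * conj b)) = 0 ∧ res (nrm b) = 0)) :
    ∃ z, nrm z = 1 ∧ res (z * a).s = 0 ∧ res (z * b).s = 0 := by
  rw [res_nrm, res_nrm, res_tr] at h
  obtain ⟨i, hi⟩ := (unit_table _ _ _ _ _ _ _ _).resolve_left h
  obtain ⟨h0, h1, h2, h3⟩ := res_unitRep i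
  refine ⟨unitRep i, nrm_unitRep i, ?_⟩
  rwa [res_mul_s, res_mul_s, h0, h1, h2, h3]

/-- The analogue of `exists_unit_mul` for multipliers of norm `2 + √2`; the only obstruction is the
form `X² + XY + Y²` modulo `√2`. -/
theorem exists_rankOne_mul (a b : Quat)
    (h : ¬ (res (nrm a) = 1 ∧ res (tr (a * conj b)) = 1 ∧ res (nrm b) = 1)) :
    ∃ z, nrm z = 2 + rt ∧ res (z * a).s = 0 ∧ res (z * b).s = 0 := by
  rw [res_nrm, res_nrm, res_tr] at h
  obtain ⟨i, hi⟩ := (rankOne_table _ _ _ _ _ _ _ _).resolve_left h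
  obtain ⟨h0, h1, h2, h3⟩ := res_rankOneRep i
  refine ⟨rankOneRep i, nrm_rankOneRep i, ?_⟩
  rwa [res_mul_s, res_mul_s, h0, h1, h2, h3]

/-- An element of odd norm is congruent to `1` modulo `√2`, up to a unit. -/
theorem exists_unit_mul_one (a : Quat) (h : res (nrm a) = 1) :
    ∃ z, nrm z = 1 ∧ res (z * a).p = 1 ∧ res (z * a).q = 0 ∧ res (z * a).r = 0 ∧
      res (z * a).s = 0 := by
  rw [res_nrm] at h
  obtain ⟨i, hi⟩ := unit_inverse_table _ _ _ _ h
  obtain ⟨h0, h1, h2, h3⟩ := res_unitRep i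
  refine ⟨unitRep i, nrm_unitRep i, ?_⟩
  simpa [h0, h1, h2, h3] using hi

/-- An element congruent to `1` modulo `√2` lies in the Lipschitz order as soon as its norm has
even irrational part. -/
theorem lip_of_res {x : Quat} (hp : res x.p = 1) (hq : res x.q = 0) (hr : res x.r = 0)
    (hs : res x.s = 0) (him : Even (nrm x).im) : Lip x := by
  obtain ⟨p, _, _, _⟩ := x
  obtain ⟨q, rfl⟩ := res_eq_zero.1 hq
  obtain ⟨r, rfl⟩ := res_eq_zero.1 hr
  obtain ⟨s, rfl⟩ := res_eq_zero.1 hs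
  have hn : nrm ⟨p, rt * q, rt * r, rt * s⟩ = p ^ 2 + rt * (p * s) +
      2 * (q ^ 2 + r ^ 2 + s ^ 2 + p * q + p * r + q * r + rt * q * s + rt * r * s) := by
    simp only [nrm]
    linear_combination (q ^ 2 + r ^ 2 + s ^ 2 + p * q + p * r + q * r * (rt * rt + 1)
      + rt * q * s + rt * r * s) * rt_sq
  rw [hn] at him
  obtain ⟨m, hm⟩ := res_eq_one.1 hp
  dsimp only at hm
  obtain ⟨t, rfl⟩ : ∃ t, s = rt * t := by
    refine res_eq_zero.1 ?_
    rw [res_def, ZMod.intCast_zmod_eq_zero_iff_dvd]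
    generalize q ^ 2 + r ^ 2 + s ^ 2 + p * q + p * r + q * r + rt * q * s + rt * r * s = K at him
    obtain ⟨k, hk⟩ := him
    simp [rt, pow_two, hm] at hk
    exact ⟨k - p.im * (2 * m + 1) - m * s.re - p.im * s.im - K.im, by push_cast; linarith⟩
  refine ⟨q, r, t, rfl, rfl, ?_⟩
  change rt * (rt * t) = _
  linear_combination t * rt_sq

end Quat
end FourSq

/-! ### Definite forms -/

namespace FourSq
open Zsqrtd Quat

theorem isSum_swap {n : ℕ} {α β γ : ℤ√2} (h : IsSumOfLinSq n α β γ) : IsSumOfLinSq n γ β α := by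
  obtain ⟨a, b, h1, h2, h3⟩ := h
  exact ⟨b, a, h3, by simpa only [mul_comm] using h2, h1⟩

theorem isSum_shear {n : ℕ} {α b γ : ℤ√2}
    (h : IsSumOfLinSq n α (2 * (b + α)) (γ + 2 * b + α)) : IsSumOfLinSq n α (2 * b) γ := by
  obtain ⟨x, y, h1, h2, h3⟩ := h
  have e1 : ∑ i, x i * (y i - x i) = ∑ i, x i * y i - α := by
    rw [h1, ← Finset.sum_sub_distrib]
    exact Finset.sum_congr rfl fun i _ => by ring
  have e2 : ∑ i, (y i - x i) ^ 2 = ∑ i, y i ^ 2 - 2 * ∑ i, x i * y i + α := by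
    rw [h1, Finset.mul_sum, ← Finset.sum_sub_distrib, ← Finset.sum_add_distrib]
    exact Finset.sum_congr rfl fun i _ => by ring
  refine ⟨x, fun i => y i - x i, h1, ?_, ?_⟩
  · rw [e1]; linear_combination h2
  · rw [e2]; linear_combination h3 - h2

theorem tp_two : TP (2 : ℤ√2) := by exact_mod_cast TP.intCast (n := 2) (by norm_num)

theorem tp_omega : TP (2 + rt : ℤ√2) := ⟨by simp [rt], by rw [norm_two]; simp [rt]⟩

theorem eq_two_mul {x : ℤ√2} (hr : Even x.re) (hi : Even x.im) : ∃ y, x = 2 * y := by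
  obtain ⟨m, hm⟩ := hr
  obtain ⟨n, hn⟩ := hi
  refine ⟨⟨m, n⟩, ?_⟩
  ext <;> simp <;> omega

theorem tr_mul_conj_of_mul (c : ℤ√2) (x y : Quat) :
    tr (x * conj (of c * y)) = c * tr (x * conj y) := by
  simp only [tr, mul_p, mul_q, mul_r, mul_s, conj_p, conj_q, conj_r, conj_s, of_p, of_q, of_r, of_s]
  ring

/-- Represent `(α, √2 b, γ)` by quaternions `x, y`. After multiplication by a unit `x` is
Lipschitz, and the even trace forces `√2 y` to be Lipschitz too. -/
theorem core_odd {α b γ : ℤ√2} (hα : TP α) (hD : TP (α * (2 * γ) - b ^ 2)) (hαr : Odd α.re)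
    (hαi : Even α.im) : IsSumOfLinSq 4 α (2 * b) (2 * γ) := by
  obtain ⟨x, y, hx, hy, hxy⟩ := rep (α := α) (β := rt * b) (γ := γ) hα (by
    convert tp_two.mul hD using 1
    linear_combination -b ^ 2 * rt_sq)
  have h1 : res (nrm x) = 1 := by rw [hx]; exact res_eq_one.2 hαr
  obtain ⟨z, hz, hp, hq, hr, hs⟩ := exists_unit_mul_one x h1
  have hL : Lip (z * x) := lip_of_res hp hq hr hs (by rwa [nrm_mul, hz, one_mul, hx])
  have ht : res (z * y).s = 0 := by
    have := tr_mul_conj_mul z x y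
    rw [hz, one_mul, hxy] at this
    have := congrArg res this
    rw [res_tr, hp, hq, hr, hs, map_mul, res_rt] at this
    simpa using this
  convert hL.isSum (lip_rt_mul ht) using 1
  · rw [nrm_mul, hz, one_mul, hx]
  · rw [tr_mul_conj_of_mul, tr_mul_conj_mul, hz, hxy]
    linear_combination -b * rt_sq
  · rw [nrm_mul, nrm_of, nrm_mul, hz, hy, one_mul, pow_two, rt_sq]

/-- The shape of the forms `αX² + 2bXY + γY²` that are sums of squares but, already over the
completion at `√2`, not sums of four squares. -/
def Bad (α b γ : ℤ√2) : Prop := ∃ α₀ β₀ γ₀ : ℤ√2, Odd α₀.re ∧ Odd β₀.re ∧ Odd γ₀.re ∧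
  α = 2 * ((2 + rt) * α₀) ∧ b = (2 + rt) * β₀ ∧ γ = 2 * ((2 + rt) * γ₀)

theorem omega_dvd {x : ℤ√2} (h : res x = 0) : ∃ y, x = (2 + rt) * y := by
  obtain ⟨y, rfl⟩ := res_eq_zero.1 h
  -- `2 + √2 = √2 (√2 + 1)` and `(√2 + 1)(√2 - 1) = 1`
  exact ⟨(rt - 1) * y, by linear_combination -y * rt_sq⟩

theorem isSum_of_res {m : ℤ√2} {x y z : Quat} (hz : nrm z = m) (hx : res (z * x).s = 0)
    (hy : res (z * y).s = 0) :
    IsSumOfLinSq 4 (2 * (m * nrm x)) (2 * (m * tr (x * conj y))) (2 * (m * nrm y)) := by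
  convert (lip_rt_mul hx).isSum (lip_rt_mul hy) using 1
  · rw [nrm_mul, nrm_of, nrm_mul, hz, pow_two, rt_sq]
  · rw [tr_mul_conj_mul, nrm_of, tr_mul_conj_mul, hz, pow_two, rt_sq]
  · rw [nrm_mul, nrm_of, nrm_mul, hz, pow_two, rt_sq]

/-- Represent `(α, b, γ)` itself if it is nonzero modulo `√2`, and otherwise its quotient by `2 +
√2`, whose quaternions are then multiplied by an element of norm `2 + √2`. -/
theorem core_even {α b γ : ℤ√2} (hα : TP (2 * α)) (hD : TP (2 * α * (2 * γ) - b ^ 2))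
    (hbad : ¬ Bad (2 * α) b (2 * γ)) : IsSumOfLinSq 4 (2 * α) (2 * b) (2 * γ) := by
  have hα' := tp_two.of_mul hα
  by_cases h0 : res α = 0 ∧ res b = 0 ∧ res γ = 0
  · obtain ⟨h1, h2, h3⟩ := h0
    obtain ⟨α, rfl⟩ := omega_dvd h1
    obtain ⟨b, rfl⟩ := omega_dvd h2
    obtain ⟨γ, rfl⟩ := omega_dvd h3
    obtain ⟨x, y, rfl, rfl, rfl⟩ := rep (α := α) (β := b) (γ := γ) (tp_omega.of_mul hα')
      ((tp_omega.mul tp_omega).of_mul (by convert hD using 1; ring))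
    obtain ⟨z, hz, hzx, hzy⟩ := exists_rankOne_mul x y fun h => hbad
      ⟨_, _, _, res_eq_one.1 h.1, res_eq_one.1 h.2.1, res_eq_one.1 h.2.2, rfl, rfl, rfl⟩
    exact isSum_of_res hz hzx hzy
  · obtain ⟨x, y, rfl, rfl, rfl⟩ := rep (α := α) (β := b) (γ := γ) hα' (by
      convert hD using 1; ring)
    obtain ⟨z, hz, hzx, hzy⟩ := exists_unit_mul x y h0
    simpa using isSum_of_res hz hzx hzy

/-- The definite case; a shear `Y ↦ X + Y` makes one outer coefficient even when both are odd. -/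
theorem core {α b γ : ℤ√2} (hα : TP α) (hD : TP (α * γ - b ^ 2)) (hαi : Even α.im)
    (hγi : Even γ.im) (hbad : ¬ Bad α b γ) : IsSumOfLinSq 4 α (2 * b) γ := by
  have hγ : TP γ := by
    refine hα.of_mul ?_
    have := hD.add_TN (TN.sq b)
    rwa [sub_add_cancel] at this
  rcases Int.even_or_odd α.re with hαr | hαr <;> rcases Int.even_or_odd γ.re with hγr | hγr
  · obtain ⟨α, rfl⟩ := eq_two_mul hαr hαi
    obtain ⟨γ, rfl⟩ := eq_two_mul hγr hγi
    exact core_even hα hD hbad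
  · obtain ⟨α, rfl⟩ := eq_two_mul hαr hαi
    refine isSum_swap (core_odd hγ ?_ hγr hγi)
    rwa [mul_comm γ]
  · obtain ⟨γ, rfl⟩ := eq_two_mul hγr hγi
    exact core_odd hα hD hαr hαi
  · refine isSum_shear ?_
    obtain ⟨δ, hδ⟩ := eq_two_mul (x := γ + 2 * b + α)
      (by simp [Int.even_add, Int.not_even_iff_odd.2 hαr, Int.not_even_iff_odd.2 hγr])
      (by simp [Int.even_add, hαi, hγi])
    rw [hδ]
    refine core_odd hα ?_ hαr hαi
    rw [← hδ]
    convert hD using 1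
    ring

end FourSq

/-! ### Degenerate forms and the global criterion -/

namespace FourSq
open Zsqrtd Quat

theorem even_im_sq (x : ℤ√2) : Even (x ^ 2).im := by
  rw [pow_two, Zsqrtd.im_mul]
  exact ⟨x.re * x.im, by ring⟩

theorem even_im_mul {x y : ℤ√2} (hx : Even x.im) (hy : Even y.im) : Even (x * y).im := by
  rw [Zsqrtd.im_mul]
  exact (hy.mul_left _).add (hx.mul_right _)

theorem even_im_sum {n : ℕ} (a : Fin n → ℤ√2) : Even (∑ i, a i ^ 2).im := by
  refine Finset.sum_induction (fun i => a i ^ 2) (fun x : ℤ√2 => Even x.im) ?_ (by simp)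
    fun i _ => even_im_sq _
  intro x y hx hy
  rw [Zsqrtd.im_add]
  exact hx.add hy

/-- The Lagrange identity, which makes the determinant of a sum of squares totally nonnegative. -/
theorem lagrange {n : ℕ} (a b : Fin n → ℤ√2) :
    2 * ((∑ i, a i ^ 2) * (∑ i, b i ^ 2) - (∑ i, a i * b i) ^ 2) =
      ∑ i, ∑ j, (a i * b j - a j * b i) ^ 2 := by
  have h1 : ∀ f g : Fin n → ℤ√2, (∑ i, f i) * (∑ i, g i) = ∑ i, ∑ j, f i * g j := fun f g => by
    rw [Finset.sum_mul_sum]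
  have h2 : ∑ i, ∑ j, a i ^ 2 * b j ^ 2 = ∑ i, ∑ j, a j ^ 2 * b i ^ 2 := Finset.sum_comm
  rw [pow_two (∑ i, a i * b i), h1, h1, two_mul]
  nth_rewrite 2 [h2]
  simp only [← Finset.sum_sub_distrib, ← Finset.sum_add_distrib]
  exact Finset.sum_congr rfl fun i _ => Finset.sum_congr rfl fun j _ => by ring

/-- Applied to the form `cX² + 2Y²`, `core` shows that `c` is a sum of four squares. -/
theorem four_sq {c : ℤ√2} (hc : TP c) (hi : Even c.im) : ∃ f : Fin 4 → ℤ√2, c = ∑ i, f i ^ 2 := by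
  obtain ⟨f, -, h, -⟩ := core (α := c) (b := 0) (γ := 2) hc (by
    convert tp_two.mul hc using 1; ring) hi (by simp) (by
    rintro ⟨_, β₀, _, -, hβ, -, -, h, -⟩
    rcases mul_eq_zero.1 h.symm with h | rfl
    · exact tp_omega.ne_zero h
    · simp at hβ)
  exact ⟨f, h⟩

theorem isSum_of_degenerate {c p q : ℤ√2} (hc : TP c) (hi : Even c.im) :
    IsSumOfLinSq 4 (p ^ 2 * c) (2 * (p * q * c)) (q ^ 2 * c) := by
  obtain ⟨f, rfl⟩ := four_sq hc hi
  refine ⟨fun i => p * f i, fun i => q * f i, ?_, ?_, ?_⟩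
  · simp only [mul_pow, Finset.mul_sum]
  · congr 1
    rw [Finset.mul_sum]
    exact Finset.sum_congr rfl fun i _ => by ring
  · simp only [mul_pow, Finset.mul_sum]

/-- A form of determinant zero is `c(pX + qY)²`, and `c`, being a value of the form, has even
irrational part. -/
theorem degenerate {α b γ : ℤ√2} (hα : TP α) (hD : α * γ = b ^ 2) (hαi : Even α.im)
    (hγi : Even γ.im) : IsSumOfLinSq 4 α (2 * b) γ := by
  obtain ⟨g, u, v, p, q, hg, -, rfl, rfl, huv⟩ := bezout_TP α b hα.ne_zero
  have hp : p ≠ 0 := by rintro rfl; simpa using hα.ne_zero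
  have h1 : p * γ = q ^ 2 * g := by
    refine mul_left_cancel₀ hg.ne_zero ?_
    linear_combination hD
  obtain ⟨c, hc⟩ : ∃ c, g = p * c :=
    ⟨(u ^ 2 * p + 2 * u * v * q) * g + v ^ 2 * γ, by
      linear_combination (-(u * p + v * q) - 1) * g * huv - v ^ 2 * h1⟩
  subst hc
  have h2 : γ = q ^ 2 * c := by
    refine mul_left_cancel₀ hp ?_
    linear_combination h1
  have h3 : c = u ^ 2 * (p * (p * c)) + 2 * (u * v * (q * (p * c))) + v ^ 2 * γ := by
    rw [h2]
    linear_combination (-(u * p + v * q) - 1) * c * huv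
  have hcT : TP c := (TP.sq hp).of_mul (by convert hα using 1; ring)
  have hci : Even c.im := by
    rw [h3, Zsqrtd.im_add, Zsqrtd.im_add]
    exact ((even_im_mul (even_im_sq u) hαi).add (by simp)).add (even_im_mul (even_im_sq v) hγi)
  convert isSum_of_degenerate (p := p) (q := q) hcT hci using 1
  · ring
  · ring

/-- The global part: a sum of squares that is not `Bad` is a sum of four squares. -/
theorem descend {α β γ : ℤ√2} (hQ : ∃ n : ℕ, IsSumOfLinSq n α β γ)
    (hbad : ∀ b, β = 2 * b → ¬ Bad α b γ) : IsSumOfLinSq 4 α β γ := by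
  obtain ⟨n, x, y, h1, h2, h3⟩ := hQ
  have hb := hbad _ h2
  have hαi : Even α.im := h1 ▸ even_im_sum x
  have hγi : Even γ.im := h3 ▸ even_im_sum y
  have hα : TN α := h1 ▸ TN.sum _ _ fun i _ => TN.sq _
  have hγ : TN γ := h3 ▸ TN.sum _ _ fun i _ => TN.sq _
  have hD : TN (2 * (α * γ - (∑ i, x i * y i) ^ 2)) := by
    rw [h1, h3, lagrange]
    exact TN.sum _ _ fun i _ => TN.sum _ _ fun j _ => TN.sq _
  rw [h2]
  generalize ∑ i, x i * y i = b at *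
  rcases hD with hD | hD
  · have hD' : α * γ = b ^ 2 :=
      sub_eq_zero.1 ((mul_eq_zero.1 hD).resolve_left tp_two.ne_zero)
    rcases hα with rfl | hα
    · have hb0 : b = 0 := by
        rw [zero_mul] at hD'
        exact pow_eq_zero_iff (two_ne_zero) |>.1 hD'.symm
      subst hb0
      rcases hγ with rfl | hγ
      · exact ⟨0, 0, by simp, by simp, by simp⟩
      · simpa using isSum_of_degenerate (p := 0) (q := 1) hγ hγi
    · exact degenerate hα hD' hαi hγi
  · have hD' := tp_two.of_mul hD
    rcases hα with rfl | hα
    · rw [zero_mul, zero_sub] at hD'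
      exact ((TN.sq b).not_neg hD').elim
    · exact core hα hD' hαi hγi hb

end FourSq

/-! ### The local obstruction -/

namespace FourSq

/-- The reduction `ℤ/4 → ℤ/2`. -/
def par : ZMod 4 →+* ZMod 2 := ZMod.castHom (by norm_num) (ZMod 2)

theorem sq_par : ∀ x : ZMod 4, x ^ 2 = ((par x).val : ZMod 4) := by decide

theorem two_mul_sq_par : ∀ x : ZMod 4, 2 * x ^ 2 = 2 * ((par x).val : ZMod 4) := by decide

set_option synthInstance.maxSize 2000 in
set_option synthInstance.maxHeartbeats 200000 in
/-- With `p` and `q` the parities of the `xᵢ` and `yᵢ`: if `∑ xᵢ² + 2yᵢ²` vanishes mod `4` and `∑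
xᵢyᵢ` is odd, then exactly two of the `xᵢ` and an odd number of the `yᵢ` are odd. -/
theorem par_weight : ∀ p0 p1 p2 p3 q0 q1 q2 q3 : ZMod 2,
    ((p0.val : ZMod 4) + 2 * (q0.val : ZMod 4)) + (p1.val + 2 * q1.val) + (p2.val + 2 * q2.val)
      + (p3.val + 2 * q3.val) = 0 →
    p0 * q0 + p1 * q1 + p2 * q2 + p3 * q3 = 1 →
    p0 + p1 + p2 + p3 = 0 ∧ q0 + q1 + q2 + q3 = 1 ∧ ¬ (p0 = p1 ∧ p0 = p2 ∧ p0 = p3) := by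
  decide +kernel

set_option synthInstance.maxSize 2000 in
set_option synthInstance.maxHeartbeats 200000 in
/-- Two subsets of size two in a set with four elements that meet in an even number of elements are
equal or complementary. -/
theorem par_orthogonal : ∀ p0 p1 p2 p3 r0 r1 r2 r3 : ZMod 2,
    p0 + p1 + p2 + p3 = 0 → ¬ (p0 = p1 ∧ p0 = p2 ∧ p0 = p3) →
    r0 + r1 + r2 + r3 = 0 → ¬ (r0 = r1 ∧ r0 = r2 ∧ r0 = r3) →
    p0 * r0 + p1 * r1 + p2 * r2 + p3 * r3 = 0 →
    (r0 = p0 ∧ r1 = p1 ∧ r2 = p2 ∧ r3 = p3) ∨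
      (r0 = p0 + 1 ∧ r1 = p1 + 1 ∧ r2 = p2 + 1 ∧ r3 = p3 + 1) := by
  decide +kernel

/-- The congruences satisfied by four linear forms `(xᵢ + yᵢ√2) X + (rᵢ + sᵢ√2) Y` whose squares
add up to a bad form are contradictory. -/
theorem no_bad {A : Type*} [CommRing A] (f : A →+* ZMod 4) (x y r s : Fin 4 → A)
    {k1 k2 k3 k4 k5 k6 : A}
    (h1 : ∑ i, (x i ^ 2 + 2 * y i ^ 2) = 4 * k1) (h2 : ∑ i, x i * y i = 2 * k2 + 1)
    (h3 : ∑ i, (r i ^ 2 + 2 * s i ^ 2) = 4 * k3) (h4 : ∑ i, r i * s i = 2 * k4 + 1)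
    (h5 : ∑ i, (x i * r i + 2 * (y i * s i)) = 2 * k5)
    (h6 : ∑ i, (x i * s i + y i * r i) = 2 * k6 + 1) : False := by
  have z4 : (4 : ZMod 4) = 0 := by decide
  have z2 : (2 : ZMod 2) = 0 := by decide
  have e1 := congrArg f h1
  have e3 := congrArg f h3
  have e2 := congrArg (par.comp f) h2
  have e4 := congrArg (par.comp f) h4
  have e5 := congrArg (par.comp f) h5
  have e6 := congrArg (par.comp f) h6
  simp only [Fin.sum_univ_four, map_add, map_mul, map_pow, map_ofNat, map_one, two_mul_sq_par, z4,
    z2, zero_mul, add_zero, zero_add, RingHom.comp_apply] at e1 e2 e3 e4 e5 e6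
  simp only [sq_par] at e1 e3
  generalize par (f (x 0)) = p0 at *
  generalize par (f (x 1)) = p1 at *
  generalize par (f (x 2)) = p2 at *
  generalize par (f (x 3)) = p3 at *
  generalize par (f (y 0)) = q0 at *
  generalize par (f (y 1)) = q1 at *
  generalize par (f (y 2)) = q2 at *
  generalize par (f (y 3)) = q3 at *
  generalize par (f (r 0)) = r0 at *
  generalize par (f (r 1)) = r1 at *
  generalize par (f (r 2)) = r2 at *
  generalize par (f (r 3)) = r3 at *
  generalize par (f (s 0)) = s0 at *
  generalize par (f (s 1)) = s1 at *
  generalize par (f (s 2)) = s2 at *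
  generalize par (f (s 3)) = s3 at *
  obtain ⟨a1, a2, a3⟩ := par_weight _ _ _ _ _ _ _ _ e1 e2
  obtain ⟨b1, b2, b3⟩ := par_weight _ _ _ _ _ _ _ _ e3 e4
  have h01 : (0 : ZMod 2) = 1 := by
    rcases par_orthogonal _ _ _ _ _ _ _ _ a1 a3 b1 b3 e5 with ⟨rfl, rfl, rfl, rfl⟩ |
      ⟨rfl, rfl, rfl, rfl⟩
    · linear_combination e2 + e4 - e6
    · linear_combination e6 + e2 + e4 - a2 - b2 - (p0 * (q0 + s0) + p1 * (q1 + s1) +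
        p2 * (q2 + s2) + p3 * (q3 + s3)) * z2
  exact absurd h01 (by decide)

/-- The valuations of `x²` and `2y²` have different parities. -/
theorem norm_sq_ne (x y : ℚ_[2]) (hy : y ≠ 0) : ‖x ^ 2‖ ≠ ‖2 * y ^ 2‖ := by
  intro h
  have h2 : ‖(2 : ℚ_[2])‖ = (2 : ℝ)⁻¹ := by simpa using Padic.norm_p (p := 2)
  have hx : x ≠ 0 := by
    rintro rfl
    simp [hy] at h
  rw [norm_mul, norm_pow, norm_pow, h2, Padic.norm_eq_zpow_neg_valuation hx,
    Padic.norm_eq_zpow_neg_valuation hy] at h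
  have h' : ((2 : ℝ) ^ (2 * -x.valuation)) = (2 : ℝ) ^ (-1 + 2 * -y.valuation) := by
    rw [zpow_add₀ two_ne_zero, mul_comm 2, mul_comm 2, zpow_mul, zpow_mul, zpow_neg_one]
    exact_mod_cast h
  have := zpow_right_injective₀ (by norm_num : (0 : ℝ) < 2) (by norm_num) h'
  omega

theorem norm_le_one_of_form {x y : ℚ_[2]} (h : ‖x ^ 2 - 2 * y ^ 2‖ ≤ 1) : ‖x‖ ≤ 1 ∧ ‖y‖ ≤ 1 := by
  have sq1 : ∀ t : ℚ_[2], ‖t ^ 2‖ ≤ 1 → ‖t‖ ≤ 1 := fun t ht => by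
    rw [norm_pow] at ht
    nlinarith [norm_nonneg t]
  rcases eq_or_ne y 0 with rfl | hy
  · simp only [ne_eq, OfNat.ofNat_ne_zero, not_false_eq_true, zero_pow, mul_zero, sub_zero] at h
    exact ⟨sq1 x h, by simp⟩
  · have hne := norm_sq_ne x y hy
    rw [sub_eq_add_neg, Padic.add_eq_max_of_ne (by rwa [norm_neg]), norm_neg] at h
    refine ⟨sq1 x ((le_max_left _ _).trans h), ?_⟩
    have hy2 := (le_max_right _ _).trans h
    have h2 : ‖(2 : ℚ_[2])‖ = (2 : ℝ)⁻¹ := by simpa using Padic.norm_p (p := 2)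
    rw [norm_mul, h2, norm_pow] at hy2
    by_contra hlt
    push Not at hlt
    have hv : 0 < -y.valuation := by
      rw [Padic.norm_eq_zpow_neg_valuation hy] at hlt
      by_contra hle
      push Not at hle
      have := zpow_le_one_of_nonpos₀ (a := ((2 : ℕ) : ℝ)) (by norm_num) hle
      linarith
    have : (2 : ℝ) ≤ ‖y‖ := by
      rw [Padic.norm_eq_zpow_neg_valuation hy]
      calc (2 : ℝ) = ((2 : ℕ) : ℝ) ^ (1 : ℤ) := by norm_num
        _ ≤ _ := zpow_le_zpow_right₀ (by norm_num) (by omega)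
    nlinarith

theorem two_ne_sq (y : ℚ_[2]) : y * y ≠ 2 := by
  intro h
  refine norm_sq_ne y 1 one_ne_zero ?_
  rw [pow_two, h]; simp

end FourSq

/-! ### Coordinates in `ℚ₂(√2)` -/

namespace FourSq

section Local

variable {F : Type*} [Field F] [Algebra ℚ_[2] F]

/-- `1` and `√2` span `ℚ₂(√2)` over `ℚ₂`. -/
theorem exists_coord {sq2 : F} (hsq2 : sq2 * sq2 = 2) (hgen : Algebra.adjoin ℚ_[2] {sq2} = ⊤)
    (f : F) : ∃ x y : ℚ_[2], f = algebraMap ℚ_[2] F x + algebraMap ℚ_[2] F y * sq2 := by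
  have hf : f ∈ Algebra.adjoin ℚ_[2] {sq2} := hgen ▸ Algebra.mem_top
  induction hf using Algebra.adjoin_induction with
  | mem z hz => exact ⟨0, 1, by simpa using hz⟩
  | algebraMap r => exact ⟨r, 0, by simp⟩
  | add a b _ _ ha hb =>
    obtain ⟨x, y, rfl⟩ := ha
    obtain ⟨x', y', rfl⟩ := hb
    exact ⟨x + x', y + y', by simp only [map_add]; ring⟩
  | mul a b _ _ ha hb =>
    obtain ⟨x, y, rfl⟩ := ha
    obtain ⟨x', y', rfl⟩ := hb
    refine ⟨x * x' + 2 * (y * y'), x * y' + y * x', ?_⟩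
    simp only [map_add, map_mul, map_ofNat]
    linear_combination algebraMap ℚ_[2] F y * algebraMap ℚ_[2] F y' * hsq2

theorem coord_unique {sq2 : F} (hsq2 : sq2 * sq2 = 2) {x y x' y' : ℚ_[2]}
    (h : algebraMap ℚ_[2] F x + algebraMap ℚ_[2] F y * sq2 =
      algebraMap ℚ_[2] F x' + algebraMap ℚ_[2] F y' * sq2) : x = x' ∧ y = y' := by
  have inj := (algebraMap ℚ_[2] F).injective
  have hy : y = y' := by
    by_contra hne
    have h0 : y - y' ≠ 0 := sub_ne_zero.2 hne
    have h1 : algebraMap ℚ_[2] F (y - y') ≠ 0 := by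
      rwa [Ne, map_eq_zero_iff _ inj]
    refine two_ne_sq ((x' - x) / (y - y')) (inj ?_)
    have h2 : sq2 = algebraMap ℚ_[2] F ((x' - x) / (y - y')) := by
      rw [map_div₀, eq_div_iff h1, map_sub, map_sub]
      linear_combination h
    rw [map_mul, ← h2, hsq2, map_ofNat]
  refine ⟨inj ?_, hy⟩
  rw [hy] at h
  exact add_right_cancel h

variable [Algebra ℤ_[2] F] [IsScalarTower ℤ_[2] ℚ_[2] F]

open Polynomial in
/-- Integral elements have coordinates in `ℤ₂`: the constant coefficient `x² - 2y²` of the minimal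
polynomial is integral, and its two terms cannot cancel. -/
theorem norm_le_of_isIntegral {sq2 : F} (hsq2 : sq2 * sq2 = 2) {x y : ℚ_[2]}
    (h : IsIntegral ℤ_[2] (algebraMap ℚ_[2] F x + algebraMap ℚ_[2] F y * sq2)) :
    ‖x‖ ≤ 1 ∧ ‖y‖ ≤ 1 := by
  rcases eq_or_ne y 0 with rfl | hy
  · rw [map_zero, zero_mul, add_zero, isIntegral_algebraMap_iff (algebraMap ℚ_[2] F).injective] at h
    obtain ⟨z, rfl⟩ := IsIntegrallyClosed.isIntegral_iff.1 h
    exact ⟨z.2, by simp⟩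
  set f := algebraMap ℚ_[2] F x + algebraMap ℚ_[2] F y * sq2 with hf
  have hQ : IsIntegral ℚ_[2] f := h.tower_top
  have hnot : f ∉ (algebraMap ℚ_[2] F).range := by
    rintro ⟨z, hz⟩
    have := coord_unique hsq2 (x := z) (y := 0) (x' := x) (y' := y) (by simpa using hz)
    exact hy this.2.symm
  have hdeg := (minpoly.two_le_natDegree_iff hQ).2 hnot
  set P : ℚ_[2][X] := X ^ 2 + C (-2 * x) * X + C (x ^ 2 - 2 * y ^ 2) with hP
  have hPm : P.Monic := by rw [hP]; monicity!
  have hPd : P.natDegree = 2 := by rw [hP]; compute_degree!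
  have hPf : aeval f P = 0 := by
    simp only [hP, hf, map_add, map_pow, map_mul, aeval_X, aeval_C, map_sub, map_neg, map_ofNat]
    linear_combination (algebraMap ℚ_[2] F y) ^ 2 * hsq2
  have hPe : P = minpoly ℚ_[2] f :=
    (eq_of_monic_of_dvd_of_natDegree_le (minpoly.monic hQ) hPm (minpoly.dvd _ _ hPf)
      (by omega))
  rw [minpoly.isIntegrallyClosed_eq_field_fractions' ℚ_[2] h] at hPe
  have h0 := congrArg (fun p => coeff p 0) hPe
  simp only [hP, coeff_map, coeff_add, coeff_X_pow, coeff_C_mul, coeff_X_zero, coeff_C_zero] at h0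
  refine norm_le_one_of_form ?_
  have : x ^ 2 - 2 * y ^ 2 = algebraMap ℤ_[2] ℚ_[2] ((minpoly ℤ_[2] f).coeff 0) := by
    simpa using h0
  rw [this]
  exact ((minpoly ℤ_[2] f).coeff 0).2

theorem exists_int_coord {sq2 : F} (hsq2 : sq2 * sq2 = 2)
    (hgen : Algebra.adjoin ℚ_[2] {sq2} = ⊤) {f : F} (hf : IsIntegral ℤ_[2] f) :
    ∃ x y : ℤ_[2], f = algebraMap ℤ_[2] F x + algebraMap ℤ_[2] F y * sq2 := by
  obtain ⟨x, y, rfl⟩ := exists_coord hsq2 hgen f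
  obtain ⟨hx, hy⟩ := norm_le_of_isIntegral hsq2 hf
  obtain ⟨x, rfl⟩ : ∃ x' : ℤ_[2], algebraMap ℤ_[2] ℚ_[2] x' = x := ⟨(⟨x, hx⟩ : ℤ_[2]), rfl⟩
  obtain ⟨y, rfl⟩ : ∃ y' : ℤ_[2], algebraMap ℤ_[2] ℚ_[2] y' = y := ⟨(⟨y, hy⟩ : ℤ_[2]), rfl⟩
  exact ⟨x, y, by rw [← IsScalarTower.algebraMap_apply, ← IsScalarTower.algebraMap_apply]⟩

theorem int_coord_unique {sq2 : F} (hsq2 : sq2 * sq2 = 2) {x y x' y' : ℤ_[2]}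
    (h : algebraMap ℤ_[2] F x + algebraMap ℤ_[2] F y * sq2 =
      algebraMap ℤ_[2] F x' + algebraMap ℤ_[2] F y' * sq2) : x = x' ∧ y = y' := by
  simp only [IsScalarTower.algebraMap_apply ℤ_[2] ℚ_[2] F] at h
  obtain ⟨h1, h2⟩ := coord_unique hsq2 h
  have inj := FaithfulSMul.algebraMap_injective ℤ_[2] ℚ_[2]
  exact ⟨inj h1, inj h2⟩

end Local
end FourSq

/-- Let `R = ℤ[√2]`, let `F = ℚ₂(√2)` with valuation ring `O_F` (the
integral closure of `ℤ₂` in `F`), and let `φ : R → O_F ⊆ F` be the ring homomorphism sending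
`√2 ∈ R` to `√2 ∈ F`.  Let `Q(x,y) = α x² + β x y + γ y²` be a binary quadratic form over
`R` that is a sum of finitely many squares of linear forms over `R`.  If the form `φ(Q)` is
a sum of `4` squares of linear forms over `O_F`, then `Q` is a sum of `4` squares of linear
forms over `R`. -/
theorem sum_of_four_descends_from_dyadic_completion
    (F : Type*) [Field F] [Algebra ℚ_[2] F]
    [Algebra ℤ_[2] F] [IsScalarTower ℤ_[2] ℚ_[2] F]
    (sq2 : F) (hsq2 : sq2 * sq2 = 2)
    (hgen : Algebra.adjoin ℚ_[2] {sq2} = ⊤)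
    (O : Set F) (hO : O = (integralClosure ℤ_[2] F : Set F))
    (φ : Zsqrtd 2 →+* F) (hφ : φ Zsqrtd.sqrtd = sq2)
    (α β γ : Zsqrtd 2)
    (hQ : ∃ n : ℕ, IsSumOfLinSq n α β γ)
    (h4 : IsSumOfLinSqIn O 4 (φ α) (φ β) (φ γ)) :
    IsSumOfLinSq 4 α β γ := by
  refine FourSq.descend hQ ?_
  rintro _ rfl ⟨α₀, β₀, γ₀, ⟨m1, h1⟩, ⟨m2, h2⟩, ⟨m3, h3⟩, rfl, rfl, rfl⟩
  obtain ⟨a, b, ha, hb, ea, eab, eb⟩ := h4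
  subst hO
  choose x y hxy using fun i => FourSq.exists_int_coord hsq2 hgen (ha i)
  choose r s hrs using fun i => FourSq.exists_int_coord hsq2 hgen (hb i)
  set ι := algebraMap ℤ_[2] F with hι
  have hφ' : ∀ z : ℤ√2, φ z = ι z.re + ι z.im * sq2 := fun z => by
    have hz : z = (z.re : ℤ√2) + (z.im : ℤ√2) * Zsqrtd.sqrtd := by ext <;> simp
    conv_lhs => rw [hz]
    simp [hφ]
  have prod : ∀ x y r s : Fin 4 → ℤ_[2], ∑ i, (ι (x i) + ι (y i) * sq2) *
      (ι (r i) + ι (s i) * sq2) = ι (∑ i, (x i * r i + 2 * (y i * s i))) +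
      ι (∑ i, (x i * s i + y i * r i)) * sq2 := by
    intro x y r s
    simp only [Fin.sum_univ_four, map_add, map_mul, map_ofNat]
    linear_combination (ι (y 0) * ι (s 0) + ι (y 1) * ι (s 1) + ι (y 2) * ι (s 2) +
      ι (y 3) * ι (s 3)) * hsq2
  have h2F : (2 : F) ≠ 0 := by
    intro h
    have := (algebraMap ℚ_[2] F).injective (a₁ := 2) (a₂ := 0) (by rw [map_ofNat, map_zero, h])
    exact two_ne_zero this
  rw [map_mul, map_ofNat] at eab
  have eab' := mul_left_cancel₀ h2F eab
  simp only [pow_two, hxy, hrs, prod, hφ'] at ea eb eab'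
  obtain ⟨u1, u2⟩ := FourSq.int_coord_unique hsq2 ea
  obtain ⟨u3, u4⟩ := FourSq.int_coord_unique hsq2 eb
  obtain ⟨u5, u6⟩ := FourSq.int_coord_unique hsq2 eab'
  simp [FourSq.rt, h1, h2, h3, Fin.sum_univ_four] at u1 u2 u3 u4 u5 u6
  refine FourSq.no_bad (PadicInt.toZModPow 2 : ℤ_[2] →+* ZMod (2 ^ 2)) x y r s
    (k1 := (2 * m1 + 1 : ℤ_[2]) + α₀.im) (k2 := (m1 : ℤ_[2]) + α₀.im)
    (k3 := (2 * m3 + 1 : ℤ_[2]) + γ₀.im) (k4 := (m3 : ℤ_[2]) + γ₀.im)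
    (k5 := (2 * m2 + 1 : ℤ_[2]) + β₀.im) (k6 := (m2 : ℤ_[2]) + β₀.im) ?_ ?_ ?_ ?_ ?_ ?_
  · rw [Fin.sum_univ_four]; linear_combination -u1
  · rw [Fin.sum_univ_four]
    refine mul_left_cancel₀ (two_ne_zero (α := ℤ_[2])) ?_
    linear_combination -u2
  · rw [Fin.sum_univ_four]; linear_combination -u3
  · rw [Fin.sum_univ_four]
    refine mul_left_cancel₀ (two_ne_zero (α := ℤ_[2])) ?_
    linear_combination -u4
  · rw [Fin.sum_univ_four]; linear_combination -u5
  · rw [Fin.sum_univ_four]; linear_combination -u6
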